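/- Let p = (p_i)_{i∈ℕ} and q = (q_i)_{i∈ℕ} be probability vectors on the countable alphabet ℕ with all entries strictly positive, such that both have infinite entropy: −∑_i p_i log p_i = ∞ and −∑_i q_i log q_i = ∞. Then the Bernoulli schemes BS(p) and BS(q) on ℕ^ℤ are finitarily isomorphic. -/

import Mathlib

open MeasureTheory ENNReal Filter

noncomputable section

/-- The left shift transformation on bi-infinite sequences: `(shift x) n = x (n+1)`. -/
def shift {A : Type*} : (ℤ → A) → (ℤ → A) := fun x n => x (n + 1)

/-- `φ` is a homomorphism (factor map) from the shift system `(ℤ → A, μ, shift)` to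
`(ℤ → B, ν, shift)`, defined on the shift-invariant full-measure domain `D`. -/
structure IsFactorMap {A B : Type*} [MeasurableSpace A] [MeasurableSpace B]
    (μ : Measure (ℤ → A)) (ν : Measure (ℤ → B))
    (D : Set (ℤ → A)) (φ : (ℤ → A) → (ℤ → B)) : Prop where
  measurable_map : Measurable φ
  dom_measurable : MeasurableSet D
  dom_shift_invariant : shift ⁻¹' D = D
  dom_full : μ D = 1
  pushforward : ν = μ.map φ
  equivariant : ∀ x ∈ D, φ (shift x) = shift (φ x)

/-- The window `[-q, r]` of `x` determines the zero coordinate of the image under `φ`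
(among points of the domain `D`). -/
def DeterminesAt {A B : Type*} (D : Set (ℤ → A)) (φ : (ℤ → A) → (ℤ → B))
    (q r : ℕ) (x : ℤ → A) : Prop :=
  ∀ y ∈ D, (∀ i : ℤ, -(q : ℤ) ≤ i → i ≤ (r : ℤ) → y i = x i) → φ y 0 = φ x 0

/-- A homomorphism `φ` with domain `D` is finitary if for almost every `x` in the domain
there are nonnegative integers `q`, `r` such that the coordinates `x_{-q}, …, x_r`
determine `(φ x)_0`. -/
def IsFinitary {A B : Type*} [MeasurableSpace A] [MeasurableSpace B]
    (μ : Measure (ℤ → A)) (D : Set (ℤ → A)) (φ : (ℤ → A) → (ℤ → B)) : Prop :=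
  ∀ᵐ x ∂μ, x ∈ D → ∃ q r : ℕ, DeterminesAt D φ q r x

/-- The code length `C(x) = q(x) + r(x)` with `q(x), r(x)` minimal such that the window
`[-q(x), r(x)]` determines the zero output coordinate (`⊤` if no finite window works). -/
def codeLength {A B : Type*} (D : Set (ℤ → A)) (φ : (ℤ → A) → (ℤ → B))
    (x : ℤ → A) : ℝ≥0∞ :=
  ⨅ (q : ℕ) (r : ℕ) (_ : DeterminesAt D φ q r x), ((q : ℝ≥0∞) + (r : ℝ≥0∞))

/-- `μ` is the Bernoulli (product) measure on `(ℤ → A)` given by the probability vector `p`. -/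
def IsBernoulliMeasure {A : Type*} [MeasurableSpace A] (μ : Measure (ℤ → A)) (p : A → ℝ) : Prop :=
  ∀ (F : Finset ℤ) (s : ℤ → A),
    μ {x | ∀ i ∈ F, x i = s i} = ENNReal.ofReal (∏ i ∈ F, p (s i))

/-- A strictly positive probability vector on a finite alphabet. -/
def IsProbVector {A : Type*} [Fintype A] (p : A → ℝ) : Prop :=
  (∀ i, 0 < p i) ∧ ∑ i, p i = 1

/-- The entropy `H(p) = -∑ p_i log p_i` of a probability vector. -/
def vecEntropy {A : Type*} [Fintype A] (p : A → ℝ) : ℝ := -∑ i, p i * Real.log (p i)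

/-- A finitary isomorphism: a pair of mutually inverse finitary factor maps. -/
def IsFinitaryIsomorphism {A B : Type*} [MeasurableSpace A] [MeasurableSpace B]
    (μ : Measure (ℤ → A)) (ν : Measure (ℤ → B))
    (D : Set (ℤ → A)) (E : Set (ℤ → B))
    (φ : (ℤ → A) → (ℤ → B)) (ψ : (ℤ → B) → (ℤ → A)) : Prop :=
  IsFactorMap μ ν D φ ∧ IsFactorMap ν μ E ψ ∧
  IsFinitary μ D φ ∧ IsFinitary ν E ψ ∧
  (∀ x ∈ D, φ x ∈ E ∧ ψ (φ x) = x) ∧ (∀ y ∈ E, ψ y ∈ D ∧ φ (ψ y) = y)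

/-- A finite positive weight without an atom heavier than half of the mass can be split into two
parts, each carrying at least a quarter of the mass. -/
lemma exists_balanced_subset {ι : Type*} (Z : Finset ι) (w : ι → ℝ) (hw : ∀ z ∈ Z, 0 < w z)
    (hhalf : ∀ z ∈ Z, w z ≤ (∑ z ∈ Z, w z) / 2) :
    ∃ Z₁ ⊆ Z, (∑ z ∈ Z, w z) / 4 ≤ ∑ z ∈ Z₁, w z ∧ ∑ z ∈ Z₁, w z ≤ 3 * (∑ z ∈ Z, w z) / 4 := by
  classical
  set M := ∑ z ∈ Z, w z with hM
  have hM0 : 0 ≤ M := Finset.sum_nonneg fun z hz => (hw z hz).le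
  obtain ⟨Z₁, hZ₁, hmax⟩ := Finset.exists_max_image
    (Z.powerset.filter fun Y => ∑ z ∈ Y, w z ≤ 3 * M / 4) (fun Y => ∑ z ∈ Y, w z)
    ⟨∅, by simp; linarith⟩
  simp only [Finset.mem_filter, Finset.mem_powerset] at hZ₁ hmax
  refine ⟨Z₁, hZ₁.1, ?_, hZ₁.2⟩
  by_contra! hlt
  have hne : ∃ z ∈ Z, z ∉ Z₁ := by
    by_contra! hsub
    rw [Finset.Subset.antisymm hZ₁.1 hsub] at hlt
    linarith
  obtain ⟨z, hz, hz₁⟩ := hne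
  have h := hmax (insert z Z₁) ⟨Finset.insert_subset hz hZ₁.1, by
    rw [Finset.sum_insert hz₁]; linarith [hhalf z hz]⟩
  rw [Finset.sum_insert hz₁] at h
  linarith [hw z hz]

/-- An interval can be partitioned into half-open intervals of prescribed lengths. -/
lemma exists_interval_partition {ι : Type*} (Z : Finset ι) (w : ι → ℝ) (hw : ∀ z ∈ Z, 0 < w z) :
    ∃ lo : ι → ℝ, (∀ z ∈ Z, 0 ≤ lo z ∧ lo z + w z ≤ ∑ z ∈ Z, w z) ∧
      ∀ u ∈ Set.Ico 0 (∑ z ∈ Z, w z), ∃! z, z ∈ Z ∧ u ∈ Set.Ico (lo z) (lo z + w z) := by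
  classical
  induction Z using Finset.induction_on with
  | empty => exact ⟨0, by simp, by simp⟩
  | insert a Z ha ih =>
    obtain ⟨lo, h1, h2⟩ := ih fun z hz => hw z (Finset.mem_insert_of_mem hz)
    have hZ0 : 0 ≤ ∑ z ∈ Z, w z :=
      Finset.sum_nonneg fun z hz => (hw z (Finset.mem_insert_of_mem hz)).le
    have ha0 := hw a (Finset.mem_insert_self a Z)
    have hne : ∀ z ∈ Z, z ≠ a := fun z hz h => ha (h ▸ hz)
    refine ⟨Function.update lo a (∑ z ∈ Z, w z), ?_, ?_⟩
    · intro z hz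
      rw [Finset.sum_insert ha]
      rcases Finset.mem_insert.1 hz with rfl | hz
      · simp only [Function.update_self]
        constructor <;> linarith
      · rw [Function.update_of_ne (hne z hz)]
        have := h1 z hz
        constructor <;> linarith
    · intro u hu
      rw [Finset.sum_insert ha] at hu
      by_cases hlt : u < ∑ z ∈ Z, w z
      · obtain ⟨z, ⟨hz, hzu⟩, huniq⟩ := h2 u ⟨hu.1, hlt⟩
        refine ⟨z, ⟨Finset.mem_insert_of_mem hz, by rwa [Function.update_of_ne (hne z hz)]⟩, ?_⟩
        rintro y ⟨hy, hyu⟩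
        rcases Finset.mem_insert.1 hy with rfl | hy
        · simp only [Function.update_self] at hyu
          linarith [hyu.1]
        · rw [Function.update_of_ne (hne y hy)] at hyu
          exact huniq y ⟨hy, hyu⟩
      · refine ⟨a, ⟨Finset.mem_insert_self a Z, ?_⟩, ?_⟩
        · simp only [Function.update_self, Set.mem_Ico]
          constructor <;> linarith [hu.2]
        · rintro y ⟨hy, hyu⟩
          rcases Finset.mem_insert.1 hy with rfl | hy
          · rfl
          · rw [Function.update_of_ne (hne y hy)] at hyu
            linarith [hyu.2, (h1 y hy).2]

open Classical in
/-- The unit cube can be partitioned into half-open boxes with volumes proportional to prescribed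
weights, in such a way that the boxes having a side longer than `3 / 4` carry at most twice the
mass of the heavy atoms. -/
lemma exists_box_partition {ι : Type*} (d : ℕ) (Z : Finset ι) (w : ι → ℝ)
    (hw : ∀ z ∈ Z, 0 < w z) (hZ : Z.Nonempty) :
    ∃ lo len : ι → Fin (d + 1) → ℝ,
      (∀ z ∈ Z, ∀ i, 0 ≤ lo z i ∧ 0 < len z i ∧ lo z i + len z i ≤ 1) ∧
      (∀ z ∈ Z, (∏ i, len z i) * ∑ z ∈ Z, w z = w z) ∧
      (∀ u : Fin (d + 1) → ℝ, (∀ i, u i ∈ Set.Ico (0 : ℝ) 1) →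
        ∃! z, z ∈ Z ∧ ∀ i, u i ∈ Set.Ico (lo z i) (lo z i + len z i)) ∧
      ∑ z ∈ Z with ∃ i, 3 / 4 < len z i, w z ≤
        2 * ∑ z ∈ Z with (∑ z ∈ Z, w z) / 2 / 4 ^ (d + 1) < w z, w z := by
  have one_side : ∀ (d : ℕ) (Z : Finset ι), (∀ z ∈ Z, 0 < w z) → Z.Nonempty →
      ∃ lo len : ι → Fin (d + 1) → ℝ,
      (∀ z ∈ Z, ∀ i, 0 ≤ lo z i ∧ 0 < len z i ∧ lo z i + len z i ≤ 1) ∧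
      (∀ z ∈ Z, (∏ i, len z i) * ∑ z ∈ Z, w z = w z) ∧
      (∀ u : Fin (d + 1) → ℝ, (∀ i, u i ∈ Set.Ico (0 : ℝ) 1) →
        ∃! z, z ∈ Z ∧ ∀ i, u i ∈ Set.Ico (lo z i) (lo z i + len z i)) ∧
      (∀ z ∈ Z, len z 0 = w z / ∑ z ∈ Z, w z) := by
    intro d Z hw hZ
    have hM : 0 < ∑ z ∈ Z, w z := Finset.sum_pos hw hZ
    have hsum : ∑ z ∈ Z, w z / ∑ z ∈ Z, w z = 1 := by
      rw [← Finset.sum_div, div_self hM.ne']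
    obtain ⟨lo, h1, h2⟩ := exists_interval_partition Z (fun z => w z / ∑ z ∈ Z, w z)
      fun z hz => div_pos (hw z hz) hM
    rw [hsum] at h1 h2
    refine ⟨fun z => Fin.cons (lo z) fun _ => 0, fun z => Fin.cons (w z / ∑ z ∈ Z, w z) fun _ => 1,
      ?_, ?_, ?_, ?_⟩
    · intro z hz i
      refine Fin.cases ?_ (fun i => ?_) i
      · exact ⟨(h1 z hz).1, div_pos (hw z hz) hM, (h1 z hz).2⟩
      · simp
    · intro z hz
      simp [Fin.prod_univ_succ, div_mul_cancel₀ _ hM.ne']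
    · intro u hu
      obtain ⟨z, ⟨hz, hzu⟩, huniq⟩ := h2 (u 0) (hu 0)
      refine ⟨z, ⟨hz, fun i => ?_⟩, fun y ⟨hy, hyu⟩ => huniq y ⟨hy, by simpa using hyu 0⟩⟩
      refine Fin.cases ?_ (fun i => ?_) i
      · simpa using hzu
      · simpa using hu i.succ
    · simp
  have hM : 0 < ∑ z ∈ Z, w z := Finset.sum_pos hw hZ
  induction d generalizing Z with
  | zero =>
    obtain ⟨lo, len, h1, h2, h3, h4⟩ := one_side 0 Z hw hZ
    refine ⟨lo, len, h1, h2, h3, ?_⟩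
    have hpos : ∀ z ∈ Z.filter (fun z => (∑ z ∈ Z, w z) / 2 / 4 ^ (0 + 1) < w z), 0 ≤ w z :=
      fun z hz => (hw z (Finset.mem_filter.1 hz).1).le
    refine (Finset.sum_le_sum_of_subset_of_nonneg ?_ fun z hz _ => hpos z hz).trans
      (by linarith [Finset.sum_nonneg hpos])
    intro z hz
    obtain ⟨hz, i, hi⟩ := Finset.mem_filter.1 hz
    refine Finset.mem_filter.2 ⟨hz, ?_⟩
    rw [show i = 0 from Fin.ext (by omega), h4 z hz, lt_div_iff₀ hM] at hi
    linarith
  | succ d ih =>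
    have hpos : ∀ z ∈ Z.filter (fun z => (∑ z ∈ Z, w z) / 2 / 4 ^ (d + 1 + 1) < w z), 0 ≤ w z :=
      fun z hz => (hw z (Finset.mem_filter.1 hz).1).le
    by_cases hbig : ∃ a ∈ Z, (∑ z ∈ Z, w z) / 2 < w a
    · obtain ⟨a, ha, hab⟩ := hbig
      obtain ⟨lo, len, h1, h2, h3, h4⟩ := one_side (d + 1) Z hw hZ
      refine ⟨lo, len, h1, h2, h3, ?_⟩
      have hle : (∑ z ∈ Z, w z) / 2 / 4 ^ (d + 1 + 1) ≤ (∑ z ∈ Z, w z) / 2 :=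
        div_le_self (by linarith) (one_le_pow₀ (by norm_num))
      have h5 := Finset.single_le_sum hpos
        (Finset.mem_filter.2 ⟨ha, lt_of_le_of_lt hle hab⟩)
      have h6 : ∑ z ∈ Z with ∃ i, 3 / 4 < len z i, w z ≤ ∑ z ∈ Z, w z :=
        Finset.sum_le_sum_of_subset_of_nonneg (Finset.filter_subset _ _) fun z hz _ => (hw z hz).le
      linarith
    · push Not at hbig
      obtain ⟨Z₁, hZ₁, hlo, hhi⟩ := exists_balanced_subset Z w hw hbig
      set Z₂ := Z \ Z₁ with hZ₂
      have hadd : ∑ z ∈ Z₂, w z + ∑ z ∈ Z₁, w z = ∑ z ∈ Z, w z := Finset.sum_sdiff hZ₁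
      have hdisj : Disjoint Z₂ Z₁ := Finset.sdiff_disjoint
      have hun : Z₂ ∪ Z₁ = Z := Finset.sdiff_union_of_subset hZ₁
      have hw₁ : ∀ z ∈ Z₁, 0 < w z := fun z hz => hw z (hZ₁ hz)
      have hw₂ : ∀ z ∈ Z₂, 0 < w z := fun z hz => hw z (Finset.sdiff_subset hz)
      have hM₁ : 0 < ∑ z ∈ Z₁, w z := by linarith
      have hM₂ : 0 < ∑ z ∈ Z₂, w z := by linarith
      obtain ⟨lo₁, len₁, a1, a2, a3, a4⟩ := ih Z₁ hw₁ (Finset.nonempty_of_sum_ne_zero hM₁.ne') hM₁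
      obtain ⟨lo₂, len₂, b1, b2, b3, b4⟩ := ih Z₂ hw₂ (Finset.nonempty_of_sum_ne_zero hM₂.ne') hM₂
      set M := ∑ z ∈ Z, w z with hMdef
      set M₁ := ∑ z ∈ Z₁, w z with hM₁def
      set M₂ := ∑ z ∈ Z₂, w z with hM₂def
      have hfrac : M₁ / M + M₂ / M = 1 := by
        rw [← add_div, add_comm, hadd, div_self hM.ne']
      have hM₁p : 0 < M₁ / M := div_pos hM₁ hM
      have hM₂p : 0 < M₂ / M := div_pos hM₂ hM
      have hM₁u : M₁ / M ≤ 3 / 4 := by rw [div_le_iff₀ hM]; linarith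
      have hM₂u : M₂ / M ≤ 3 / 4 := by rw [div_le_iff₀ hM]; linarith
      have hcases : ∀ z ∈ Z, z ∈ Z₁ ∨ (z ∈ Z₂ ∧ z ∉ Z₁) := fun z hz => by
        by_cases h : z ∈ Z₁
        · exact Or.inl h
        · exact Or.inr ⟨Finset.mem_sdiff.2 ⟨hz, h⟩, h⟩
      let lo : ι → Fin (d + 1 + 1) → ℝ := fun z =>
        if z ∈ Z₁ then Fin.cons 0 (lo₁ z) else Fin.cons (M₁ / M) (lo₂ z)
      let len : ι → Fin (d + 1 + 1) → ℝ := fun z =>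
        if z ∈ Z₁ then Fin.cons (M₁ / M) (len₁ z) else Fin.cons (M₂ / M) (len₂ z)
      have lo_of_mem : ∀ z ∈ Z₁, lo z = Fin.cons 0 (lo₁ z) := fun z hz => if_pos hz
      have lo_of_not : ∀ z ∉ Z₁, lo z = Fin.cons (M₁ / M) (lo₂ z) := fun z hz => if_neg hz
      have len_of_mem : ∀ z ∈ Z₁, len z = Fin.cons (M₁ / M) (len₁ z) := fun z hz => if_pos hz
      have len_of_not : ∀ z ∉ Z₁, len z = Fin.cons (M₂ / M) (len₂ z) := fun z hz => if_neg hz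
      have not_mem : ∀ z ∈ Z₂, z ∉ Z₁ := fun z hz => (Finset.mem_sdiff.1 hz).2
      refine ⟨lo, len, ?_, ?_, ?_, ?_⟩
      · intro z hz i
        rcases hcases z hz with h | ⟨h, h'⟩
        · rw [lo_of_mem z h, len_of_mem z h]
          refine Fin.cases ?_ (fun i => ?_) i
          · exact ⟨le_rfl, hM₁p, by simp; linarith⟩
          · simpa using a1 z h i
        · rw [lo_of_not z h', len_of_not z h']
          refine Fin.cases ?_ (fun i => ?_) i
          · exact ⟨hM₁p.le, hM₂p, by simp; linarith⟩
          · simpa using b1 z h i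
      · intro z hz
        rcases hcases z hz with h | ⟨h, h'⟩
        · rw [len_of_mem z h, Fin.prod_univ_succ]
          simp only [Fin.cons_zero, Fin.cons_succ]
          rw [mul_right_comm, div_mul_cancel₀ _ hM.ne', mul_comm, a2 z h]
        · rw [len_of_not z h', Fin.prod_univ_succ]
          simp only [Fin.cons_zero, Fin.cons_succ]
          rw [mul_right_comm, div_mul_cancel₀ _ hM.ne', mul_comm, b2 z h]
      · intro u hu
        by_cases hlt : u 0 < M₁ / M
        · obtain ⟨z, ⟨hz, hzu⟩, huniq⟩ := a3 (fun i => u i.succ) fun i => hu i.succ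
          refine ⟨z, ⟨hZ₁ hz, fun i => ?_⟩, ?_⟩
          · rw [lo_of_mem z hz, len_of_mem z hz]
            refine Fin.cases ?_ (fun i => ?_) i
            · simpa using ⟨(hu 0).1, hlt⟩
            · simpa using hzu i
          · rintro y ⟨hy, hyu⟩
            rcases hcases y hy with h | ⟨h, h'⟩
            · rw [lo_of_mem y h, len_of_mem y h] at hyu
              exact huniq y ⟨h, fun i => by simpa using hyu i.succ⟩
            · rw [lo_of_not y h', len_of_not y h'] at hyu
              have := (hyu 0).1
              simp only [Fin.cons_zero] at this
              linarith
        · obtain ⟨z, ⟨hz, hzu⟩, huniq⟩ := b3 (fun i => u i.succ) fun i => hu i.succ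
          have hz' := not_mem z hz
          refine ⟨z, ⟨Finset.sdiff_subset hz, fun i => ?_⟩, ?_⟩
          · rw [lo_of_not z hz', len_of_not z hz']
            refine Fin.cases ?_ (fun i => ?_) i
            · simp only [Fin.cons_zero, hfrac]
              exact ⟨not_lt.1 hlt, (hu 0).2⟩
            · simpa using hzu i
          · rintro y ⟨hy, hyu⟩
            rcases hcases y hy with h | ⟨h, h'⟩
            · rw [lo_of_mem y h, len_of_mem y h] at hyu
              have := (hyu 0).2
              simp only [Fin.cons_zero] at this
              linarith
            · rw [lo_of_not y h', len_of_not y h'] at hyu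
              exact huniq y ⟨h, fun i => by simpa using hyu i.succ⟩
      · have hbad₁ : ∑ z ∈ Z₁ with ∃ i, 3 / 4 < len z i, w z
            = ∑ z ∈ Z₁ with ∃ i, 3 / 4 < len₁ z i, w z := by
          congr 1
          refine Finset.filter_congr fun z hz => ?_
          rw [len_of_mem z hz, Fin.exists_fin_succ]
          simp [hM₁u.not_gt]
        have hbad₂ : ∑ z ∈ Z₂ with ∃ i, 3 / 4 < len z i, w z
            = ∑ z ∈ Z₂ with ∃ i, 3 / 4 < len₂ z i, w z := by
          congr 1
          refine Finset.filter_congr fun z hz => ?_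
          rw [len_of_not z (not_mem z hz), Fin.exists_fin_succ]
          simp [hM₂u.not_gt]
        have heavy : ∀ Y ⊆ Z, ∀ m, M / 4 ≤ m →
            ∑ z ∈ Y with m / 2 / 4 ^ (d + 1) < w z, w z ≤
              ∑ z ∈ Y with M / 2 / 4 ^ (d + 1 + 1) < w z, w z := by
          intro Y hY m hm
          refine Finset.sum_le_sum_of_subset_of_nonneg ?_
            fun z hz _ => (hw z (hY (Finset.mem_filter.1 hz).1)).le
          intro z hz
          obtain ⟨hz, hzw⟩ := Finset.mem_filter.1 hz
          refine Finset.mem_filter.2 ⟨hz, lt_of_le_of_lt ?_ hzw⟩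
          have e : M / 2 / 4 ^ (d + 1 + 1) = M / 4 / 2 / 4 ^ (d + 1) := by
            rw [pow_succ]; field_simp
          rw [e]
          gcongr
        have h₁ := heavy Z₁ hZ₁ M₁ hlo
        have h₂ := heavy Z₂ Finset.sdiff_subset M₂ (by linarith)
        rw [← hun, Finset.filter_union, Finset.filter_union,
          Finset.sum_union (Finset.disjoint_filter_filter hdisj),
          Finset.sum_union (Finset.disjoint_filter_filter hdisj), hbad₁, hbad₂]
        linarith

/-! ### Cuts and blocks -/

/-- A cut is a site at which a run of `m` zeros starts. -/
def IsCut (m : ℕ) (ξ : ℤ → ℕ) (c : ℤ) : Prop := ∀ i : ℕ, i < m → ξ (c + i) = 0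

/-- The distance from `t` to the last cut at or before `t`. -/
def back (m : ℕ) (ξ : ℤ → ℕ) (t : ℤ) : ℕ := sInf {a : ℕ | IsCut m ξ (t - a)}

/-- The number of sites strictly between `t` and the first cut after `t`. -/
def ahead (m : ℕ) (ξ : ℤ → ℕ) (t : ℤ) : ℕ := sInf {b : ℕ | IsCut m ξ (t + 1 + b)}

/-- There are cuts arbitrarily far in both directions. -/
def CutsUnbounded (m : ℕ) (ξ : ℤ → ℕ) : Prop :=
  ∀ N : ℕ, (∃ n : ℕ, N ≤ n ∧ IsCut m ξ (-n)) ∧ ∃ n : ℕ, N ≤ n ∧ IsCut m ξ n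

/-- The sites `c, …, c + d` form a maximal interval without cuts except at `c`. -/
structure IsBlock (m : ℕ) (ξ : ℤ → ℕ) (c : ℤ) (d : ℕ) : Prop where
  left : IsCut m ξ c
  right : IsCut m ξ (c + d + 1)
  between : ∀ i : ℕ, 0 < i → i ≤ d → ¬ IsCut m ξ (c + i)

/-- The restriction of a sequence to the sites `c, …, c + d`. -/
def pat {β : Type*} (x : ℤ → β) (c : ℤ) (d : ℕ) : Fin (d + 1) → β := fun i => x (c + (i : ℕ))

lemma isCut_shift {m : ℕ} {ξ : ℤ → ℕ} {c : ℤ} : IsCut m (shift ξ) c ↔ IsCut m ξ (c + 1) := by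
  simp only [IsCut, shift]
  refine forall₂_congr fun i _ => ?_
  rw [add_right_comm]

lemma back_shift (m : ℕ) (ξ : ℤ → ℕ) (t : ℤ) : back m (shift ξ) t = back m ξ (t + 1) := by
  simp only [back, isCut_shift]
  congr! 4
  ring

lemma ahead_shift (m : ℕ) (ξ : ℤ → ℕ) (t : ℤ) : ahead m (shift ξ) t = ahead m ξ (t + 1) := by
  simp only [ahead, isCut_shift]
  congr! 4
  ring

lemma pat_shift {β : Type*} (x : ℤ → β) (c : ℤ) (d : ℕ) : pat (shift x) c d = pat x (c + 1) d := by
  funext i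
  simp only [pat, shift]
  congr 1
  ring

lemma cutsUnbounded_shift {m : ℕ} {ξ : ℤ → ℕ} :
    CutsUnbounded m (shift ξ) ↔ CutsUnbounded m ξ := by
  constructor
  · intro h N
    obtain ⟨n, hn, hc⟩ := (h (N + 1)).1
    obtain ⟨n', hn', hc'⟩ := (h N).2
    rw [isCut_shift] at hc hc'
    refine ⟨⟨n - 1, by omega, ?_⟩, ⟨n' + 1, by omega, ?_⟩⟩
    · convert hc using 1; push_cast [show 1 ≤ n by omega]; ring
    · convert hc' using 1; push_cast; ring
  · intro h N
    obtain ⟨n, hn, hc⟩ := (h N).1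
    obtain ⟨n', hn', hc'⟩ := (h (N + 1)).2
    refine ⟨⟨n + 1, by omega, ?_⟩, ⟨n' - 1, by omega, ?_⟩⟩ <;> rw [isCut_shift]
    · convert hc using 1; push_cast; ring
    · convert hc' using 1; push_cast [show 1 ≤ n' by omega]; ring

lemma CutsUnbounded.isBlock {m : ℕ} {ξ : ℤ → ℕ} (h : CutsUnbounded m ξ) (t : ℤ) :
    IsBlock m ξ (t - back m ξ t) (back m ξ t + ahead m ξ t) := by
  have h1 : {a : ℕ | IsCut m ξ (t - a)}.Nonempty := by
    obtain ⟨n, hn, hc⟩ := (h t.natAbs).1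
    refine ⟨(t + n).toNat, ?_⟩
    simp only [Set.mem_ofPred_eq]
    convert hc using 1
    omega
  have h2 : {b : ℕ | IsCut m ξ (t + 1 + b)}.Nonempty := by
    obtain ⟨n, hn, hc⟩ := (h (t.natAbs + 1)).2
    refine ⟨(n - t - 1).toNat, ?_⟩
    simp only [Set.mem_ofPred_eq]
    convert hc using 1
    omega
  refine ⟨Nat.sInf_mem h1, ?_, ?_⟩
  · have := Nat.sInf_mem h2
    simp only [Set.mem_ofPred_eq] at this
    convert this using 1
    simp only [ahead, back]
    push_cast
    ring
  · intro i hi hid hc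
    rcases le_or_gt i (back m ξ t) with hle | hgt
    · have h3 : back m ξ t - i ∈ {a : ℕ | IsCut m ξ (t - a)} := by
        simp only [Set.mem_ofPred_eq]
        convert hc using 1
        omega
      have := Nat.sInf_le h3
      simp only [back] at *
      omega
    · have h3 : i - back m ξ t - 1 ∈ {b : ℕ | IsCut m ξ (t + 1 + b)} := by
        simp only [Set.mem_ofPred_eq]
        convert hc using 1
        omega
      have := Nat.sInf_le h3
      simp only [ahead] at *
      omega

lemma IsBlock.back_eq {m : ℕ} {ξ : ℤ → ℕ} {c : ℤ} {d : ℕ} (h : IsBlock m ξ c d) {i : ℕ}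
    (hi : i ≤ d) : back m ξ (c + i) = i := by
  have hmem : i ∈ {a : ℕ | IsCut m ξ (c + i - a)} := by simpa using h.left
  refine le_antisymm (Nat.sInf_le hmem) ?_
  by_contra hlt
  have hc := Nat.sInf_mem ⟨i, hmem⟩
  simp only [back] at hlt
  refine h.between (i - sInf {a : ℕ | IsCut m ξ (c + i - a)}) (by omega) (by omega) ?_
  simp only [Set.mem_ofPred_eq] at hc
  convert hc using 1
  omega

lemma IsBlock.ahead_eq {m : ℕ} {ξ : ℤ → ℕ} {c : ℤ} {d : ℕ} (h : IsBlock m ξ c d) {i : ℕ}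
    (hi : i ≤ d) : ahead m ξ (c + i) = d - i := by
  have hmem : d - i ∈ {b : ℕ | IsCut m ξ (c + i + 1 + b)} := by
    simp only [Set.mem_ofPred_eq]
    convert h.right using 1
    omega
  refine le_antisymm (Nat.sInf_le hmem) ?_
  by_contra hlt
  have hc := Nat.sInf_mem ⟨d - i, hmem⟩
  simp only [ahead] at hlt
  refine h.between (i + 1 + sInf {b : ℕ | IsCut m ξ (c + i + 1 + b)}) (by omega) (by omega) ?_
  simp only [Set.mem_ofPred_eq] at hc
  convert hc using 1
  omega

lemma IsCut.congr {m : ℕ} {ξ η : ℤ → ℕ} {c : ℤ} (h : IsCut m ξ c)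
    (hη : ∀ i : ℕ, i < m → η (c + i) = ξ (c + i)) : IsCut m η c :=
  fun i hi => (hη i hi).trans (h i hi)

lemma IsBlock.congr {m : ℕ} {ξ η : ℤ → ℕ} {c : ℤ} {d : ℕ} (h : IsBlock m ξ c d)
    (hη : ∀ i : ℕ, i < d + 1 + m → η (c + i) = ξ (c + i)) : IsBlock m η c d := by
  refine ⟨h.left.congr fun i hi => hη i (by omega), h.right.congr fun i hi => ?_, ?_⟩
  · have := hη (d + 1 + i) (by omega)
    push_cast at this
    convert this using 2 <;> ring
  · intro i hi hid hc
    refine h.between i hi hid (hc.congr fun j hj => ?_)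
    have := hη (i + j) (by omega)
    push_cast at this
    rw [add_assoc, this]

/-! ### Cell systems -/

/-- For every finite pattern `w`, a partition of the unit cube into boxes indexed by the patterns
`v` refining `w`; the volume of the box of `v` is the product of the weights of the letters of
`v`, and boxes with a long side are rare unless there are heavy patterns. -/
structure CellSystem where
  fib : ℕ → Finset ℕ
  wt : ℕ → ℝ
  lo : ∀ d : ℕ, (Fin (d + 1) → ℕ) → (Fin (d + 1) → ℕ) → Fin (d + 1) → ℝ
  len : ∀ d : ℕ, (Fin (d + 1) → ℕ) → (Fin (d + 1) → ℕ) → Fin (d + 1) → ℝ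
  wt_pos : ∀ a, ∀ b ∈ fib a, 0 < wt b
  wt_sum : ∀ a, (fib a).Nonempty → ∑ b ∈ fib a, wt b = 1
  box : ∀ d w v, (∀ i, v i ∈ fib (w i)) →
    ∀ i, 0 ≤ lo d w v i ∧ 0 < len d w v i ∧ lo d w v i + len d w v i ≤ 1
  prod_len : ∀ d w v, (∀ i, v i ∈ fib (w i)) → ∏ i, len d w v i = ∏ i, wt (v i)
  existsUnique : ∀ d w, (∀ i, (fib (w i)).Nonempty) → ∀ u : Fin (d + 1) → ℝ,
    (∀ i, u i ∈ Set.Ico (0 : ℝ) 1) →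
      ∃! v, (∀ i, v i ∈ fib (w i)) ∧ ∀ i, u i ∈ Set.Ico (lo d w v i) (lo d w v i + len d w v i)
  long_le : ∀ d w, (∀ i, (fib (w i)).Nonempty) →
    letI := Classical.decPred fun v : Fin (d + 1) → ℕ => ∃ i, 3 / 4 < len d w v i
    letI := Classical.decPred fun v : Fin (d + 1) → ℕ => 1 / 2 / 4 ^ (d + 1) < ∏ i, wt (v i)
    ∑ v ∈ Fintype.piFinset fun i => fib (w i) with ∃ i, 3 / 4 < len d w v i, ∏ i, wt (v i) ≤
      2 * ∑ v ∈ Fintype.piFinset fun i => fib (w i) with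
        1 / 2 / 4 ^ (d + 1) < ∏ i, wt (v i), ∏ i, wt (v i)

lemma exists_cellSystem (fib : ℕ → Finset ℕ) (wt : ℕ → ℝ) (hpos : ∀ a, ∀ b ∈ fib a, 0 < wt b)
    (hsum : ∀ a, (fib a).Nonempty → ∑ b ∈ fib a, wt b = 1) :
    ∃ C : CellSystem, C.fib = fib ∧ C.wt = wt := by
  classical
  have hex : ∀ (d : ℕ) (w : Fin (d + 1) → ℕ), ∃ lo len : (Fin (d + 1) → ℕ) → Fin (d + 1) → ℝ,
      (∀ i, (fib (w i)).Nonempty) →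
      (∀ v, (∀ i, v i ∈ fib (w i)) → ∀ i, 0 ≤ lo v i ∧ 0 < len v i ∧ lo v i + len v i ≤ 1) ∧
      (∀ v, (∀ i, v i ∈ fib (w i)) → ∏ i, len v i = ∏ i, wt (v i)) ∧
      (∀ u : Fin (d + 1) → ℝ, (∀ i, u i ∈ Set.Ico (0 : ℝ) 1) →
        ∃! v, (∀ i, v i ∈ fib (w i)) ∧ ∀ i, u i ∈ Set.Ico (lo v i) (lo v i + len v i)) ∧
      ∑ v ∈ Fintype.piFinset fun i => fib (w i) with ∃ i, 3 / 4 < len v i, ∏ i, wt (v i) ≤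
        2 * ∑ v ∈ Fintype.piFinset fun i => fib (w i) with
          1 / 2 / 4 ^ (d + 1) < ∏ i, wt (v i), ∏ i, wt (v i) := by
    intro d w
    by_cases hw : ∀ i, (fib (w i)).Nonempty
    · obtain ⟨lo, len, h1, h2, h3, h4⟩ := exists_box_partition d
        (Fintype.piFinset fun i => fib (w i)) (fun v => ∏ i, wt (v i))
        (fun v hv => Finset.prod_pos fun i _ => hpos _ _ (Fintype.mem_piFinset.1 hv i))
        (by simpa [Fintype.piFinset_nonempty] using hw)
      have hone : ∑ v ∈ Fintype.piFinset fun i => fib (w i), ∏ i, wt (v i) = 1 := by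
        rw [← Finset.prod_univ_sum]
        exact Finset.prod_eq_one fun i _ => hsum _ (hw i)
      rw [hone] at h2 h4
      simp only [Fintype.mem_piFinset, mul_one] at h1 h2 h3
      exact ⟨lo, len, fun _ => ⟨h1, h2, h3, h4⟩⟩
    · exact ⟨fun _ _ => 0, fun _ _ => 0, fun h => absurd h hw⟩
  choose lo len h using hex
  have hne : ∀ (d : ℕ) (w v : Fin (d + 1) → ℕ), (∀ i, v i ∈ fib (w i)) →
    ∀ i, (fib (w i)).Nonempty := fun d w v hv i => ⟨_, hv i⟩
  refine ⟨⟨fib, wt, lo, len, hpos, hsum, fun d w v hv => (h d w (hne d w v hv)).1 v hv,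
    fun d w v hv => (h d w (hne d w v hv)).2.1 v hv, fun d w hw => (h d w hw).2.2.1,
    fun d w hw => ?_⟩, rfl, rfl⟩
  convert (h d w hw).2.2.2

namespace CellSystem

variable (C : CellSystem)

open Classical in
/-- The label of the box containing `u`. -/
@[irreducible] def lab (d : ℕ) (w : Fin (d + 1) → ℕ) (u : Fin (d + 1) → ℝ) (i : Fin (d + 1)) : ℕ :=
  ∑ v ∈ Fintype.piFinset fun i => C.fib (w i),
    if ∀ i, u i ∈ Set.Ico (C.lo d w v i) (C.lo d w v i + C.len d w v i) then v i else 0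

variable {C} in
lemma lab_eq {d : ℕ} {w v : Fin (d + 1) → ℕ} (hv : ∀ i, v i ∈ C.fib (w i)) {u : Fin (d + 1) → ℝ}
    (hu : ∀ i, u i ∈ Set.Ico (C.lo d w v i) (C.lo d w v i + C.len d w v i)) :
    C.lab d w u = v := by
  classical
  have hcube : ∀ i, u i ∈ Set.Ico (0 : ℝ) 1 := fun i =>
    ⟨(C.box d w v hv i).1.trans (hu i).1, (hu i).2.trans_le (C.box d w v hv i).2.2⟩
  funext i
  rw [lab, Finset.sum_eq_single v, if_pos hu]
  · intro v' hv' hne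
    rw [if_neg]
    exact fun hu' => hne ((C.existsUnique d w (fun i => ⟨_, hv i⟩) u hcube).unique
      ⟨Fintype.mem_piFinset.1 hv', hu'⟩ ⟨hv, hu⟩)
  · exact fun h => absurd (Fintype.mem_piFinset.2 hv) h

variable {C} in
lemma lab_spec {d : ℕ} {w : Fin (d + 1) → ℕ} (hw : ∀ i, (C.fib (w i)).Nonempty)
    {u : Fin (d + 1) → ℝ} (hu : ∀ i, u i ∈ Set.Ico (0 : ℝ) 1) :
    (∀ i, C.lab d w u i ∈ C.fib (w i)) ∧ ∀ i, u i ∈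
      Set.Ico (C.lo d w (C.lab d w u) i) (C.lo d w (C.lab d w u) i + C.len d w (C.lab d w u) i) := by
  obtain ⟨v, ⟨hv, huv⟩, -⟩ := C.existsUnique d w hw u hu
  rw [lab_eq hv huv]
  exact ⟨hv, huv⟩

/-- The `i`-th label on the sites `c, …, c + d`. -/
def labAt (ξ : ℤ → ℕ) (z : ℤ → ℝ) (c : ℤ) (d i : ℕ) : ℕ :=
  if h : i < d + 1 then C.lab d (pat ξ c d) (pat z c d) ⟨i, h⟩ else 0

/-- The lower end of the `i`-th side of the box labelled by `η` on the sites `c, …, c + d`. -/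
def loAt (ξ η : ℤ → ℕ) (c : ℤ) (d i : ℕ) : ℝ :=
  if h : i < d + 1 then C.lo d (pat ξ c d) (pat η c d) ⟨i, h⟩ else 0

/-- The length of the `i`-th side of the box labelled by `η` on the sites `c, …, c + d`. -/
def lenAt (ξ η : ℤ → ℕ) (c : ℤ) (d i : ℕ) : ℝ :=
  if h : i < d + 1 then C.len d (pat ξ c d) (pat η c d) ⟨i, h⟩ else 0

/-- The refined sequence of letters. -/
def relabel (m : ℕ) (ξ : ℤ → ℕ) (z : ℤ → ℝ) (t : ℤ) : ℕ :=
  C.labAt ξ z (t - back m ξ t) (back m ξ t + ahead m ξ t) (back m ξ t)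

/-- The lower end of the interval at site `t`. -/
def loSite (m : ℕ) (ξ η : ℤ → ℕ) (t : ℤ) : ℝ :=
  C.loAt ξ η (t - back m ξ t) (back m ξ t + ahead m ξ t) (back m ξ t)

/-- The length of the interval at site `t`. -/
def lenSite (m : ℕ) (ξ η : ℤ → ℕ) (t : ℤ) : ℝ :=
  C.lenAt ξ η (t - back m ξ t) (back m ξ t + ahead m ξ t) (back m ξ t)

/-- The rescaled coordinates. -/
def rescale (m : ℕ) (ξ : ℤ → ℕ) (z : ℤ → ℝ) (t : ℤ) : ℝ :=
  (z t - C.loSite m ξ (C.relabel m ξ z) t) / C.lenSite m ξ (C.relabel m ξ z) t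

variable {C} {m : ℕ} {ξ : ℤ → ℕ} {c : ℤ} {d : ℕ}

lemma relabel_of_isBlock (h : IsBlock m ξ c d) (z : ℤ → ℝ) (i : Fin (d + 1)) :
    C.relabel m ξ z (c + (i : ℕ)) = C.lab d (pat ξ c d) (pat z c d) i := by
  have hi : (i : ℕ) ≤ d := by omega
  rw [relabel, h.back_eq hi, h.ahead_eq hi, add_sub_cancel_right, Nat.add_sub_cancel' hi, labAt,
    dif_pos i.2]

lemma loSite_of_isBlock (h : IsBlock m ξ c d) (η : ℤ → ℕ) (i : Fin (d + 1)) :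
    C.loSite m ξ η (c + (i : ℕ)) = C.lo d (pat ξ c d) (pat η c d) i := by
  have hi : (i : ℕ) ≤ d := by omega
  rw [loSite, h.back_eq hi, h.ahead_eq hi, add_sub_cancel_right, Nat.add_sub_cancel' hi, loAt,
    dif_pos i.2]

lemma lenSite_of_isBlock (h : IsBlock m ξ c d) (η : ℤ → ℕ) (i : Fin (d + 1)) :
    C.lenSite m ξ η (c + (i : ℕ)) = C.len d (pat ξ c d) (pat η c d) i := by
  have hi : (i : ℕ) ≤ d := by omega
  rw [lenSite, h.back_eq hi, h.ahead_eq hi, add_sub_cancel_right, Nat.add_sub_cancel' hi, lenAt,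
    dif_pos i.2]

lemma pat_relabel (h : IsBlock m ξ c d) (z : ℤ → ℝ) :
    pat (C.relabel m ξ z) c d = C.lab d (pat ξ c d) (pat z c d) :=
  funext fun i => relabel_of_isBlock h z i

variable (C)

lemma relabel_shift (m : ℕ) (ξ : ℤ → ℕ) (z : ℤ → ℝ) :
    C.relabel m (shift ξ) (shift z) = shift (C.relabel m ξ z) := by
  have key : ∀ c d i, C.labAt (shift ξ) (shift z) c d i = C.labAt ξ z (c + 1) d i := fun c d i => by
    simp only [labAt, pat_shift]
  funext t
  rw [relabel, key, back_shift, ahead_shift, sub_add_eq_add_sub]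
  rfl

lemma loSite_shift (m : ℕ) (ξ η : ℤ → ℕ) (t : ℤ) :
    C.loSite m (shift ξ) (shift η) t = C.loSite m ξ η (t + 1) := by
  have key : ∀ c d i, C.loAt (shift ξ) (shift η) c d i = C.loAt ξ η (c + 1) d i := fun c d i => by
    simp only [loAt, pat_shift]
  rw [loSite, key, back_shift, ahead_shift, sub_add_eq_add_sub]
  rfl

lemma lenSite_shift (m : ℕ) (ξ η : ℤ → ℕ) (t : ℤ) :
    C.lenSite m (shift ξ) (shift η) t = C.lenSite m ξ η (t + 1) := by
  have key : ∀ c d i, C.lenAt (shift ξ) (shift η) c d i = C.lenAt ξ η (c + 1) d i :=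
    fun c d i => by simp only [lenAt, pat_shift]
  rw [lenSite, key, back_shift, ahead_shift, sub_add_eq_add_sub]
  rfl

lemma rescale_shift (m : ℕ) (ξ : ℤ → ℕ) (z : ℤ → ℝ) :
    C.rescale m (shift ξ) (shift z) = shift (C.rescale m ξ z) := by
  funext t
  rw [rescale, relabel_shift, loSite_shift, lenSite_shift]
  rfl

end CellSystem

/-! ### The law of the refined pair for a fixed sequence of letters -/

/-- Lebesgue measure on the unit interval, as a measure on the line. -/
def unitMeasure : Measure ℝ := volume.restrict (Set.Ico 0 1)

instance : IsProbabilityMeasure unitMeasure := ⟨by simp [unitMeasure]⟩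

/-- The law of an independent sequence of uniform variables. -/
def unitSeq : Measure (ℤ → ℝ) := Measure.infinitePi fun _ => unitMeasure

instance : IsProbabilityMeasure unitSeq := by unfold unitSeq; infer_instance

lemma ae_unitSeq_of_ae {P : ℝ → Prop} (h : ∀ᵐ x ∂unitMeasure, P x) :
    ∀ᵐ z ∂unitSeq, ∀ t, P (z t) := by
  rw [ae_all_iff]
  intro t
  exact (measurePreserving_eval_infinitePi (fun _ : ℤ => unitMeasure) t).quasiMeasurePreserving.ae h

lemma ae_unitSeq_mem : ∀ᵐ z ∂unitSeq, ∀ t, z t ∈ Set.Ico (0 : ℝ) 1 :=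
  ae_unitSeq_of_ae (ae_restrict_mem measurableSet_Ico)

lemma unitMeasure_rescale {a l : ℝ} (ha : 0 ≤ a) (hl : 0 < l) (hal : a + l ≤ 1) {A : Set ℝ}
    (hA : MeasurableSet A) :
    unitMeasure {x | x ∈ Set.Ico a (a + l) ∧ (x - a) / l ∈ A}
      = ENNReal.ofReal l * unitMeasure A := by
  have hset : {x | x ∈ Set.Ico a (a + l) ∧ (x - a) / l ∈ A} ∩ Set.Ico 0 1
      = (fun x => x + -a) ⁻¹' ((fun x => x * l⁻¹) ⁻¹' (A ∩ Set.Ico 0 1)) := by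
    ext x
    simp only [Set.mem_inter_iff, Set.mem_ofPred_eq, Set.mem_Ico, Set.mem_preimage,
      ← div_eq_mul_inv, ← sub_eq_add_neg, le_div_iff₀ hl, div_lt_iff₀ hl]
    constructor
    · rintro ⟨⟨⟨h1, h2⟩, h3⟩, h4, h5⟩
      exact ⟨h3, by linarith, by linarith⟩
    · rintro ⟨h1, h2, h3⟩
      exact ⟨⟨⟨by linarith, by linarith⟩, h1⟩, by linarith, by linarith⟩
  have hm : MeasurableSet {x | x ∈ Set.Ico a (a + l) ∧ (x - a) / l ∈ A} :=
    measurableSet_Ico.inter ((by fun_prop : Measurable fun x : ℝ => (x - a) / l) hA)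
  rw [unitMeasure, Measure.restrict_apply hm, hset, measure_preimage_add_right,
    Real.volume_preimage_mul_right (inv_ne_zero hl.ne'), inv_inv, abs_of_pos hl,
    Measure.restrict_apply hA]

lemma prod_Ico_eq_prod_fin {M : Type*} [CommMonoid M] (f : ℤ → M) (c : ℤ) (d : ℕ) :
    ∏ t ∈ Finset.Ico c (c + d + 1), f t = ∏ i : Fin (d + 1), f (c + (i : ℕ)) := by
  symm
  refine Finset.prod_bij (fun i _ => c + (i : ℕ)) (fun i _ => ?_) (fun i _ j _ h => ?_)
    (fun t ht => ?_) fun _ _ => rfl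
  · rw [Finset.mem_Ico]; omega
  · exact Fin.ext (by omega)
  · rw [Finset.mem_Ico] at ht
    exact ⟨⟨(t - c).toNat, by omega⟩, Finset.mem_univ _, by simp only; omega⟩

namespace CellSystem

variable {C : CellSystem} {m : ℕ} {ξ : ℤ → ℕ}

lemma exists_isBlock_between (hcut : CutsUnbounded m ξ) {c₀ c₁ : ℤ} (h₀ : IsCut m ξ c₀)
    (h₁ : IsCut m ξ c₁) {t : ℤ} (ht : t ∈ Finset.Ico c₀ c₁) :
    ∃ (c : ℤ) (d : ℕ), IsBlock m ξ c d ∧ c₀ ≤ c ∧ c + d + 1 ≤ c₁ ∧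
      ∃ i : Fin (d + 1), t = c + (i : ℕ) := by
  rw [Finset.mem_Ico] at ht
  have ha : back m ξ t ≤ (t - c₀).toNat := by
    refine Nat.sInf_le ?_
    simp only [Set.mem_ofPred_eq]
    convert h₀ using 1
    omega
  have hb : ahead m ξ t ≤ (c₁ - t - 1).toNat := by
    refine Nat.sInf_le ?_
    simp only [Set.mem_ofPred_eq]
    convert h₁ using 1
    omega
  exact ⟨_, _, hcut.isBlock t, by omega, by push_cast; omega, ⟨back m ξ t, by omega⟩, by simp⟩

lemma prod_lenSite (hcut : CutsUnbounded m ξ) (c₁ : ℤ) (h₁ : IsCut m ξ c₁) (η : ℤ → ℕ) :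
    ∀ (n : ℕ) (c₀ : ℤ), (c₁ - c₀).toNat = n → IsCut m ξ c₀ →
      (∀ t ∈ Finset.Ico c₀ c₁, η t ∈ C.fib (ξ t)) →
        ∏ t ∈ Finset.Ico c₀ c₁, C.lenSite m ξ η t = ∏ t ∈ Finset.Ico c₀ c₁, C.wt (η t) := by
  intro n
  induction n using Nat.strong_induction_on with
  | _ n ih =>
    intro c₀ hn h₀ hη
    rcases le_or_gt c₁ c₀ with hle | hlt
    · rw [Finset.Ico_eq_empty (not_lt.2 hle), Finset.prod_empty, Finset.prod_empty]
    have hmem : c₀ ∈ Finset.Ico c₀ c₁ := Finset.mem_Ico.2 ⟨le_rfl, hlt⟩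
    obtain ⟨c, d, hB, hc, hd, i, hi⟩ := exists_isBlock_between hcut h₀ h₁ hmem
    obtain rfl : c = c₀ := by omega
    have hsplit : ∀ f : ℤ → ℝ, ∏ t ∈ Finset.Ico c c₁, f t =
        (∏ t ∈ Finset.Ico c (c + d + 1), f t) * ∏ t ∈ Finset.Ico (c + d + 1) c₁, f t := fun f => by
      rw [← Finset.prod_union (Finset.Ico_disjoint_Ico_consecutive _ _ _),
        Finset.Ico_union_Ico_eq_Ico (by omega) hd]
    rw [hsplit, hsplit, ih _ (by omega) (c + d + 1) rfl hB.right fun t ht => hη t (by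
      rw [Finset.mem_Ico] at ht ⊢; omega), prod_Ico_eq_prod_fin, prod_Ico_eq_prod_fin]
    congr 1
    simp only [lenSite_of_isBlock hB]
    exact C.prod_len d _ (pat η c d) fun j => hη _ (by rw [Finset.mem_Ico]; omega)

lemma pat_congr {c₀ c₁ c : ℤ} {d : ℕ} {η η' : ℤ → ℕ} (h : ∀ t ∈ Finset.Ico c₀ c₁, η t = η' t)
    (hc : c₀ ≤ c) (hd : c + d + 1 ≤ c₁) : pat η c d = pat η' c d :=
  funext fun i => h _ (by rw [Finset.mem_Ico]; omega)

lemma loSite_congr (hcut : CutsUnbounded m ξ) {c₀ c₁ : ℤ} (h₀ : IsCut m ξ c₀)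
    (h₁ : IsCut m ξ c₁) {η η' : ℤ → ℕ} (h : ∀ t ∈ Finset.Ico c₀ c₁, η t = η' t) {t : ℤ}
    (ht : t ∈ Finset.Ico c₀ c₁) :
    C.loSite m ξ η t = C.loSite m ξ η' t ∧ C.lenSite m ξ η t = C.lenSite m ξ η' t := by
  obtain ⟨c, d, hB, hc, hd, i, rfl⟩ := exists_isBlock_between hcut h₀ h₁ ht
  rw [loSite_of_isBlock hB, loSite_of_isBlock hB, lenSite_of_isBlock hB, lenSite_of_isBlock hB,
    pat_congr h hc hd]
  exact ⟨rfl, rfl⟩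

lemma relabel_spec (hcut : CutsUnbounded m ξ) (hξ : ∀ t, (C.fib (ξ t)).Nonempty) {z : ℤ → ℝ}
    (hz : ∀ t, z t ∈ Set.Ico (0 : ℝ) 1) (t : ℤ) :
    C.relabel m ξ z t ∈ C.fib (ξ t) ∧
      z t ∈ Set.Ico (C.loSite m ξ (C.relabel m ξ z) t)
        (C.loSite m ξ (C.relabel m ξ z) t + C.lenSite m ξ (C.relabel m ξ z) t) := by
  have hB := hcut.isBlock t
  obtain ⟨h1, h2⟩ := C.lab_spec (w := pat ξ (t - back m ξ t) (back m ξ t + ahead m ξ t))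
    (fun i => hξ _) (u := pat z (t - back m ξ t) (back m ξ t + ahead m ξ t)) fun i => hz _
  have hi : t = t - back m ξ t + ((⟨back m ξ t, by omega⟩ :
    Fin (back m ξ t + ahead m ξ t + 1)) : ℕ) := by simp
  rw [hi, relabel_of_isBlock hB, loSite_of_isBlock hB, lenSite_of_isBlock hB, pat_relabel hB]
  exact ⟨h1 _, h2 _⟩

lemma site_box (hcut : CutsUnbounded m ξ) {c₀ c₁ : ℤ} (h₀ : IsCut m ξ c₀)
    (h₁ : IsCut m ξ c₁) {η : ℤ → ℕ} (hη : ∀ t ∈ Finset.Ico c₀ c₁, η t ∈ C.fib (ξ t)) {t : ℤ}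
    (ht : t ∈ Finset.Ico c₀ c₁) :
    0 ≤ C.loSite m ξ η t ∧ 0 < C.lenSite m ξ η t ∧ C.loSite m ξ η t + C.lenSite m ξ η t ≤ 1 := by
  obtain ⟨c, d, hB, hc, hd, i, rfl⟩ := exists_isBlock_between hcut h₀ h₁ ht
  rw [loSite_of_isBlock hB, lenSite_of_isBlock hB]
  exact C.box d _ _ (fun j => hη _ (by rw [Finset.mem_Ico]; omega)) i

lemma relabel_eq_iff (hcut : CutsUnbounded m ξ) (hξ : ∀ t, (C.fib (ξ t)).Nonempty) {z : ℤ → ℝ}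
    (hz : ∀ t, z t ∈ Set.Ico (0 : ℝ) 1) {c₀ c₁ : ℤ} (h₀ : IsCut m ξ c₀) (h₁ : IsCut m ξ c₁)
    {η : ℤ → ℕ} (hη : ∀ t ∈ Finset.Ico c₀ c₁, η t ∈ C.fib (ξ t)) :
    (∀ t ∈ Finset.Ico c₀ c₁, C.relabel m ξ z t = η t) ↔
      ∀ t ∈ Finset.Ico c₀ c₁,
        z t ∈ Set.Ico (C.loSite m ξ η t) (C.loSite m ξ η t + C.lenSite m ξ η t) := by
  constructor
  · intro h t ht
    have := (relabel_spec hcut hξ hz t).2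
    rwa [(loSite_congr hcut h₀ h₁ h ht).1, (loSite_congr hcut h₀ h₁ h ht).2] at this
  · intro h t ht
    obtain ⟨c, d, hB, hc, hd, i, rfl⟩ := exists_isBlock_between hcut h₀ h₁ ht
    rw [relabel_of_isBlock hB, lab_eq (v := pat η c d)]
    · rfl
    · exact fun j => hη _ (by rw [Finset.mem_Ico]; omega)
    · intro j
      have := h (c + (j : ℕ)) (by rw [Finset.mem_Ico]; omega)
      rwa [loSite_of_isBlock hB, lenSite_of_isBlock hB] at this

lemma measure_relabel_eq (hcut : CutsUnbounded m ξ) (hξ : ∀ t, (C.fib (ξ t)).Nonempty)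
    {c₀ c₁ : ℤ} (h₀ : IsCut m ξ c₀) (h₁ : IsCut m ξ c₁)
    {η : ℤ → ℕ} (hη : ∀ t ∈ Finset.Ico c₀ c₁, η t ∈ C.fib (ξ t)) {A : ℤ → Set ℝ}
    (hA : ∀ t, MeasurableSet (A t)) :
    unitSeq {z | ∀ t ∈ Finset.Ico c₀ c₁, C.relabel m ξ z t = η t ∧ C.rescale m ξ z t ∈ A t} =
      ∏ t ∈ Finset.Ico c₀ c₁, (ENNReal.ofReal (C.wt (η t)) * unitMeasure (A t)) := by
  have hcongr : {z | ∀ t ∈ Finset.Ico c₀ c₁, C.relabel m ξ z t = η t ∧ C.rescale m ξ z t ∈ A t}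
      =ᵐ[unitSeq] (Set.pi (Finset.Ico c₀ c₁ : Finset ℤ) fun t =>
        {x | x ∈ Set.Ico (C.loSite m ξ η t) (C.loSite m ξ η t + C.lenSite m ξ η t) ∧
          (x - C.loSite m ξ η t) / C.lenSite m ξ η t ∈ A t}) := by
    filter_upwards [ae_unitSeq_mem] with z hz
    have hiff := relabel_eq_iff hcut hξ hz h₀ h₁ hη
    refine propext ⟨fun h t ht => ?_, fun h t ht => ?_⟩
    · have hz' : ∀ t ∈ Finset.Ico c₀ c₁, C.relabel m ξ z t = η t := fun t ht => (h t ht).1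
      refine ⟨hiff.1 hz' t ht, ?_⟩
      have := (h t ht).2
      rwa [rescale, (loSite_congr hcut h₀ h₁ hz' ht).1, (loSite_congr hcut h₀ h₁ hz' ht).2] at this
    · have hz' := hiff.2 fun t ht => (h t ht).1
      refine ⟨hz' t ht, ?_⟩
      rw [rescale, (loSite_congr hcut h₀ h₁ hz' ht).1, (loSite_congr hcut h₀ h₁ hz' ht).2]
      exact (h t ht).2
  rw [measure_congr hcongr, unitSeq, Measure.infinitePi_pi]
  · rw [Finset.prod_congr rfl fun t ht => unitMeasure_rescale (site_box hcut h₀ h₁ hη ht).1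
      (site_box hcut h₀ h₁ hη ht).2.1 (site_box hcut h₀ h₁ hη ht).2.2 (hA t),
      Finset.prod_mul_distrib, Finset.prod_mul_distrib]
    congr 1
    rw [← ENNReal.ofReal_prod_of_nonneg fun t ht => (site_box hcut h₀ h₁ hη ht).2.1.le,
      ← ENNReal.ofReal_prod_of_nonneg fun t ht => (C.wt_pos _ _ (hη t ht)).le,
      prod_lenSite hcut c₁ h₁ η _ c₀ rfl h₀ hη]
  · exact fun t _ => measurableSet_Ico.inter
      ((by fun_prop : Measurable fun x : ℝ =>
        (x - C.loSite m ξ η t) / C.lenSite m ξ η t) (hA t))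

end CellSystem

/-! ### Measurability -/

lemma measurable_natSInf {X : Type*} [MeasurableSpace X] {Q : ℕ → X → Prop}
    (hQ : ∀ a, MeasurableSet {x | Q a x}) : Measurable fun x => sInf {a : ℕ | Q a x} := by
  refine measurable_of_Iic fun n => ?_
  have : (fun x => sInf {a : ℕ | Q a x}) ⁻¹' Set.Iic n =
      (⋂ a, {x | Q a x}ᶜ) ∪ ⋃ a ∈ Set.Iic n, {x | Q a x} := by
    ext x
    simp only [Set.mem_preimage, Set.mem_Iic, Set.mem_union, Set.mem_iInter, Set.mem_compl_iff,
      Set.mem_ofPred_eq, Set.mem_iUnion, exists_prop]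
    constructor
    · intro h
      by_cases hne : {a : ℕ | Q a x}.Nonempty
      · exact Or.inr ⟨_, h, Nat.sInf_mem hne⟩
      · exact Or.inl fun a ha => hne ⟨a, ha⟩
    · rintro (h | ⟨a, ha, hQ⟩)
      · simp [h]
      · exact (Nat.sInf_le hQ).trans ha
  rw [this]
  exact (MeasurableSet.iInter fun a => (hQ a).compl).union
    (MeasurableSet.biUnion (Set.to_countable _) fun a _ => hQ a)

lemma measurableSet_isCut (m : ℕ) (c : ℤ) : MeasurableSet {ξ : ℤ → ℕ | IsCut m ξ c} := by
  simp only [IsCut, Set.ofPred_forall]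
  exact MeasurableSet.iInter fun i => MeasurableSet.iInter fun _ =>
    (measurable_pi_apply _) (measurableSet_singleton 0)

lemma measurable_back (m : ℕ) (t : ℤ) : Measurable fun ξ => back m ξ t :=
  measurable_natSInf fun _ => measurableSet_isCut m _

lemma measurable_ahead (m : ℕ) (t : ℤ) : Measurable fun ξ => ahead m ξ t :=
  measurable_natSInf fun _ => measurableSet_isCut m _

lemma measurableSet_cutsUnbounded (m : ℕ) : MeasurableSet {ξ | CutsUnbounded m ξ} := by
  simp only [CutsUnbounded, Set.ofPred_forall, Set.ofPred_and, Set.ofPred_exists]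
  refine MeasurableSet.iInter fun N => MeasurableSet.inter ?_ ?_ <;>
  exact MeasurableSet.iUnion fun n => MeasurableSet.inter (by simp) (measurableSet_isCut m _)

lemma measurable_pat {β : Type*} [MeasurableSpace β] (c : ℤ) (d : ℕ) :
    Measurable fun x : ℤ → β => pat x c d :=
  measurable_pi_lambda _ fun _ => measurable_pi_apply _

lemma measurable_blockwise {X β : Type*} [MeasurableSpace X] [MeasurableSpace β]
    (m : ℕ) (t : ℤ) {f : X → ℤ → ℕ} (hf : Measurable f) {H : X → ℤ → ℕ → ℕ → β}
    (hH : ∀ c d i, Measurable fun x => H x c d i) :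
    Measurable fun x => H x (t - back m (f x) t) (back m (f x) t + ahead m (f x) t)
      (back m (f x) t) := by
  have h : Measurable fun y : (ℕ × ℕ) × X => H y.2 (t - y.1.1) (y.1.1 + y.1.2) y.1.1 :=
    measurable_from_prod_countable_right fun y => hH (t - y.1) (y.1 + y.2) y.1
  exact h.comp ((((measurable_back m t).comp hf).prodMk ((measurable_ahead m t).comp hf)).prodMk
    measurable_id)

namespace CellSystem

variable (C : CellSystem)

lemma measurable_lab (d : ℕ) (w : Fin (d + 1) → ℕ) (i : Fin (d + 1)) :
    Measurable fun u => C.lab d w u i := by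
  classical
  unfold lab
  refine Finset.measurable_sum _ fun v _ => Measurable.ite ?_ measurable_const measurable_const
  simp only [Set.ofPred_forall]
  exact MeasurableSet.iInter fun i => (measurable_pi_apply i) measurableSet_Ico

lemma measurable_labAt (c : ℤ) (d i : ℕ) :
    Measurable fun x : (ℤ → ℕ) × (ℤ → ℝ) => C.labAt x.1 x.2 c d i := by
  unfold labAt
  split_ifs with h
  · have h1 : Measurable fun y : (Fin (d + 1) → ℕ) × (Fin (d + 1) → ℝ) =>
        C.lab d y.1 y.2 ⟨i, h⟩ :=
      measurable_from_prod_countable_right fun w => C.measurable_lab d w _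
    have h2 : Measurable fun x : (ℤ → ℕ) × (ℤ → ℝ) => (pat x.1 c d, pat x.2 c d) :=
      ((measurable_pat c d).comp measurable_fst).prodMk ((measurable_pat c d).comp measurable_snd)
    exact h1.comp h2
  · exact measurable_const

lemma measurable_loAt (c : ℤ) (d i : ℕ) :
    Measurable fun x : (ℤ → ℕ) × (ℤ → ℕ) => C.loAt x.1 x.2 c d i := by
  unfold loAt
  split_ifs with h
  · have h1 : Measurable fun y : (Fin (d + 1) → ℕ) × (Fin (d + 1) → ℕ) =>
        C.lo d y.1 y.2 ⟨i, h⟩ := measurable_of_countable _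
    have h2 : Measurable fun x : (ℤ → ℕ) × (ℤ → ℕ) => (pat x.1 c d, pat x.2 c d) :=
      ((measurable_pat c d).comp measurable_fst).prodMk ((measurable_pat c d).comp measurable_snd)
    exact h1.comp h2
  · exact measurable_const

lemma measurable_lenAt (c : ℤ) (d i : ℕ) :
    Measurable fun x : (ℤ → ℕ) × (ℤ → ℕ) => C.lenAt x.1 x.2 c d i := by
  unfold lenAt
  split_ifs with h
  · have h1 : Measurable fun y : (Fin (d + 1) → ℕ) × (Fin (d + 1) → ℕ) =>
        C.len d y.1 y.2 ⟨i, h⟩ := measurable_of_countable _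
    have h2 : Measurable fun x : (ℤ → ℕ) × (ℤ → ℕ) => (pat x.1 c d, pat x.2 c d) :=
      ((measurable_pat c d).comp measurable_fst).prodMk ((measurable_pat c d).comp measurable_snd)
    exact h1.comp h2
  · exact measurable_const

lemma measurable_relabel (m : ℕ) :
    Measurable fun x : (ℤ → ℕ) × (ℤ → ℝ) => C.relabel m x.1 x.2 :=
  measurable_pi_lambda _ fun t => measurable_blockwise m t measurable_fst
    (H := fun x c d i => C.labAt x.1 x.2 c d i) fun c d i => C.measurable_labAt c d i

lemma measurable_loSite (m : ℕ) (t : ℤ) :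
    Measurable fun x : (ℤ → ℕ) × (ℤ → ℕ) => C.loSite m x.1 x.2 t :=
  measurable_blockwise m t measurable_fst
    (H := fun x c d i => C.loAt x.1 x.2 c d i) fun c d i => C.measurable_loAt c d i

lemma measurable_lenSite (m : ℕ) (t : ℤ) :
    Measurable fun x : (ℤ → ℕ) × (ℤ → ℕ) => C.lenSite m x.1 x.2 t :=
  measurable_blockwise m t measurable_fst
    (H := fun x c d i => C.lenAt x.1 x.2 c d i) fun c d i => C.measurable_lenAt c d i

lemma measurable_rescale (m : ℕ) :
    Measurable fun x : (ℤ → ℕ) × (ℤ → ℝ) => C.rescale m x.1 x.2 := by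
  have h := measurable_fst.prodMk (C.measurable_relabel m)
  exact measurable_pi_lambda _ fun t =>
    (((measurable_pi_apply t).comp measurable_snd).sub ((C.measurable_loSite m t).comp h)).div
      ((C.measurable_lenSite m t).comp h)

variable {C} {m : ℕ} {ξ : ℤ → ℕ}

open Classical in
/-- The law of the labels and rescaled coordinates between two cuts. -/
lemma measure_pat_relabel (hcut : CutsUnbounded m ξ) (hξ : ∀ t, (C.fib (ξ t)).Nonempty)
    {c : ℤ} {d : ℕ} (h₀ : IsCut m ξ c) (h₁ : IsCut m ξ (c + d + 1))
    (Q : (Fin (d + 1) → ℕ) → Prop) {A : ℤ → Set ℝ} (hA : ∀ t, MeasurableSet (A t)) :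
    unitSeq {z | Q (pat (C.relabel m ξ z) c d) ∧
        ∀ t ∈ Finset.Ico c (c + d + 1), C.rescale m ξ z t ∈ A t} =
      ∑ v ∈ Fintype.piFinset fun i => C.fib (pat ξ c d i) with Q v,
        ∏ i, (ENNReal.ofReal (C.wt (v i)) * unitMeasure (A (c + (i : ℕ)))) := by
  have hmr : Measurable fun z => C.relabel m ξ z :=
    (C.measurable_relabel m).comp measurable_prodMk_left
  have hms : Measurable fun z => C.rescale m ξ z :=
    (C.measurable_rescale m).comp measurable_prodMk_left
  let ext : (Fin (d + 1) → ℕ) → ℤ → ℕ := fun v t =>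
    if h : (t - c).toNat < d + 1 then v ⟨(t - c).toNat, h⟩ else 0
  have hext : ∀ v (i : Fin (d + 1)), ext v (c + (i : ℕ)) = v i := fun v i => by
    have h : (c + (i : ℕ) - c).toNat = i := by omega
    simp only [ext, h, i.2, dite_true, Fin.eta]
  have hsurj : ∀ t ∈ Finset.Ico c (c + d + 1), ∃ i : Fin (d + 1), t = c + (i : ℕ) := fun t ht => by
    rw [Finset.mem_Ico] at ht
    exact ⟨⟨(t - c).toNat, by omega⟩, by simp only; omega⟩
  have hpat : ∀ z v, (∀ t ∈ Finset.Ico c (c + d + 1), C.relabel m ξ z t = ext v t) ↔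
      pat (C.relabel m ξ z) c d = v := fun z v => by
    constructor
    · exact fun h => funext fun i => (h _ (by rw [Finset.mem_Ico]; omega)).trans (hext v i)
    · rintro rfl t ht
      obtain ⟨i, rfl⟩ := hsurj t ht
      rw [hext]
      rfl
  have hcongr : {z | Q (pat (C.relabel m ξ z) c d) ∧
        ∀ t ∈ Finset.Ico c (c + d + 1), C.rescale m ξ z t ∈ A t} =ᵐ[unitSeq]
      (⋃ v ∈ (Fintype.piFinset fun i => C.fib (pat ξ c d i)).filter Q,
        {z | ∀ t ∈ Finset.Ico c (c + d + 1),
          C.relabel m ξ z t = ext v t ∧ C.rescale m ξ z t ∈ A t} : Set (ℤ → ℝ)) := by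
    refine eventuallyEq_set.2 ?_
    filter_upwards [ae_unitSeq_mem] with z hz
    simp only [Set.mem_iUnion, exists_prop, Finset.mem_filter, Fintype.mem_piFinset,
      Set.mem_ofPred_eq]
    constructor
    · rintro ⟨hQ, hz'⟩
      exact ⟨_, ⟨fun i => (relabel_spec hcut hξ hz _).1, hQ⟩,
        fun t ht => ⟨(hpat z _).2 rfl t ht, hz' t ht⟩⟩
    · rintro ⟨v, ⟨hv, hQ⟩, h⟩
      rw [(hpat z v).1 fun t ht => (h t ht).1]
      exact ⟨hQ, fun t ht => (h t ht).2⟩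
  rw [measure_congr hcongr, measure_biUnion_finset]
  · refine Finset.sum_congr rfl fun v hv => ?_
    have hv := Fintype.mem_piFinset.1 (Finset.mem_filter.1 hv).1
    rw [measure_relabel_eq hcut hξ h₀ h₁ _ hA, prod_Ico_eq_prod_fin]
    · simp only [hext]
    · intro t ht
      obtain ⟨i, rfl⟩ := hsurj t ht
      rw [hext]
      exact hv i
  · intro v _ v' _ hne
    refine Set.disjoint_left.2 fun z h h' => hne ?_
    rw [← (hpat z v).1 fun t ht => (h t ht).1, ← (hpat z v').1 fun t ht => (h' t ht).1]
  · intro v _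
    simp only [Set.ofPred_forall, Set.ofPred_and]
    refine MeasurableSet.iInter fun t => MeasurableSet.iInter fun _ => MeasurableSet.inter ?_ ?_
    · exact ((measurable_pi_apply t).comp hmr) (measurableSet_singleton _)
    · exact ((measurable_pi_apply t).comp hms) (hA t)

/-- Cylinder probabilities of the refined pair. -/
lemma measure_relabel_cylinder (hcut : CutsUnbounded m ξ) (hξ : ∀ t, (C.fib (ξ t)).Nonempty)
    (F G : Finset ℤ) (η : ℤ → ℕ) {A : ℤ → Set ℝ} (hA : ∀ t, MeasurableSet (A t))
    (hG : ∀ t ∉ G, A t = Set.univ) :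
    unitSeq {z | (∀ t ∈ F, C.relabel m ξ z t = η t) ∧ ∀ t ∈ G, C.rescale m ξ z t ∈ A t} =
      (∏ t ∈ F, if η t ∈ C.fib (ξ t) then ENNReal.ofReal (C.wt (η t)) else 0) *
        ∏ t ∈ G, unitMeasure (A t) := by
  classical
  obtain ⟨c, d, h₀, h₁, hsub⟩ : ∃ (c : ℤ) (d : ℕ), IsCut m ξ c ∧ IsCut m ξ (c + d + 1) ∧
      F ∪ G ⊆ Finset.Ico c (c + d + 1) := by
    obtain ⟨N, hN⟩ : ∃ N : ℕ, ∀ t ∈ F ∪ G, t.natAbs ≤ N :=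
      ⟨(F ∪ G).sup Int.natAbs, fun t ht => Finset.le_sup (f := Int.natAbs) ht⟩
    obtain ⟨n, hn, hc⟩ := (hcut N).1
    obtain ⟨n', hn', hc'⟩ := (hcut (N + 1)).2
    refine ⟨-n, n + n' - 1, hc, ?_, fun t ht => ?_⟩
    · convert hc' using 1
      omega
    · rw [Finset.mem_Ico]
      have := hN t ht
      omega
  have hsubF := Finset.subset_union_left.trans hsub
  have hsubG := Finset.subset_union_right.trans hsub
  have hset : {z | (∀ t ∈ F, C.relabel m ξ z t = η t) ∧ ∀ t ∈ G, C.rescale m ξ z t ∈ A t} =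
      {z | (fun v : Fin (d + 1) → ℕ => ∀ i : Fin (d + 1), c + (i : ℕ) ∈ F → v i = η (c + (i : ℕ)))
          (pat (C.relabel m ξ z) c d) ∧
        ∀ t ∈ Finset.Ico c (c + d + 1), C.rescale m ξ z t ∈ A t} := by
    ext z
    refine and_congr ⟨fun h i hi => h _ hi, fun h t ht => ?_⟩ ⟨fun h t ht => ?_, fun h t ht => ?_⟩
    · have htI := Finset.mem_Ico.1 (hsubF ht)
      have := h ⟨(t - c).toNat, by omega⟩
      simp only [pat, show c + ((t - c).toNat : ℤ) = t by omega] at this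
      exact this ht
    · by_cases htG : t ∈ G
      · exact h t htG
      · rw [hG t htG]; trivial
    · exact h t (hsubG ht)
  rw [hset]
  refine (measure_pat_relabel hcut hξ h₀ h₁
    (fun v => ∀ i : Fin (d + 1), c + (i : ℕ) ∈ F → v i = η (c + (i : ℕ))) hA).trans ?_
  refine (Finset.sum_congr (s₂ := Fintype.piFinset fun i : Fin (d + 1) =>
    (C.fib (pat ξ c d i)).filter fun b => c + (i : ℕ) ∈ F → b = η (c + (i : ℕ))) ?_
      fun _ _ => rfl).trans ?_
  · ext v
    simp only [Finset.mem_filter, Fintype.mem_piFinset, forall_and]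
  have hprodF : ∏ t ∈ F, (if η t ∈ C.fib (ξ t) then ENNReal.ofReal (C.wt (η t)) else 0) =
      ∏ t ∈ Finset.Ico c (c + d + 1),
        if t ∈ F then if η t ∈ C.fib (ξ t) then ENNReal.ofReal (C.wt (η t)) else 0 else 1 := by
    rw [← Finset.prod_subset hsubF]
    · exact Finset.prod_congr rfl fun t ht => by rw [if_pos ht]
    · intro t _ ht
      rw [if_neg ht]
  have hprodG : ∏ t ∈ G, unitMeasure (A t) =
      ∏ t ∈ Finset.Ico c (c + d + 1), unitMeasure (A t) :=
    Finset.prod_subset hsubG fun t _ ht => by rw [hG t ht, measure_univ]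
  rw [← Finset.prod_univ_sum (f := fun (i : Fin (d + 1)) b =>
    ENNReal.ofReal (C.wt b) * unitMeasure (A (c + (i : ℕ)))), hprodF, hprodG,
    ← Finset.prod_mul_distrib, prod_Ico_eq_prod_fin]
  refine Finset.prod_congr rfl fun i _ => ?_
  rw [← Finset.sum_mul]
  congr 1
  split_ifs with hiF hi
  · simp only [hiF, true_imp_iff, pat]
    rw [Finset.filter_eq', if_pos hi, Finset.sum_singleton]
  · simp only [hiF, true_imp_iff, pat]
    rw [Finset.filter_eq', if_neg hi, Finset.sum_empty]
  · simp only [hiF, false_imp_iff, Finset.filter_true, pat]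
    rw [← ENNReal.ofReal_sum_of_nonneg fun b hb => (C.wt_pos _ b hb).le, C.wt_sum _ (hξ _),
      ENNReal.ofReal_one]

/-- The block of `t` is labelled by a pattern of large conditional probability. -/
def Heavy (C : CellSystem) (m : ℕ) (ξ η : ℤ → ℕ) (t : ℤ) : Prop :=
  1 / 2 / 4 ^ (back m ξ t + ahead m ξ t + 1) <
    ∏ i, C.wt (pat η (t - back m ξ t) (back m ξ t + ahead m ξ t) i)

lemma measure_long_le (hcut : CutsUnbounded m ξ) (hξ : ∀ t, (C.fib (ξ t)).Nonempty) (t : ℤ) :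
    unitSeq {z | 3 / 4 < C.lenSite m ξ (C.relabel m ξ z) t} ≤
      2 * unitSeq {z | C.Heavy m ξ (C.relabel m ξ z) t} := by
  classical
  have hB := hcut.isBlock t
  obtain ⟨i, hi⟩ : ∃ i : Fin (back m ξ t + ahead m ξ t + 1), t = t - back m ξ t + (i : ℕ) :=
    ⟨⟨back m ξ t, by omega⟩, by simp⟩
  have hsub : {z | 3 / 4 < C.lenSite m ξ (C.relabel m ξ z) t} ⊆
      {z | ∃ j, 3 / 4 < C.len _ (pat ξ (t - back m ξ t) (back m ξ t + ahead m ξ t))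
        (pat (C.relabel m ξ z) (t - back m ξ t) (back m ξ t + ahead m ξ t)) j} := by
    intro z hz
    rw [Set.mem_ofPred_eq, hi, lenSite_of_isBlock hB] at hz
    exact ⟨i, hz⟩
  refine (measure_mono hsub).trans ?_
  unfold Heavy
  generalize t - (back m ξ t : ℤ) = c at hB
  generalize back m ξ t + ahead m ξ t = d at hB
  have hlaw : ∀ Q : (Fin (d + 1) → ℕ) → Prop, unitSeq {z | Q (pat (C.relabel m ξ z) c d)} =
      ENNReal.ofReal (∑ v ∈ Fintype.piFinset fun i => C.fib (pat ξ c d i) with Q v,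
        ∏ i, C.wt (v i)) := by
    intro Q
    have h := measure_pat_relabel hcut hξ hB.left hB.right Q (A := fun _ => Set.univ)
      fun _ => MeasurableSet.univ
    simp only [Set.mem_univ, implies_true, and_true, measure_univ, mul_one] at h
    have hpos : ∀ v ∈ (Fintype.piFinset fun i => C.fib (pat ξ c d i)).filter Q, ∀ i,
        0 ≤ C.wt (v i) := fun v hv i =>
      (C.wt_pos _ _ (Fintype.mem_piFinset.1 (Finset.mem_filter.1 hv).1 i)).le
    rw [h, ENNReal.ofReal_sum_of_nonneg fun v hv => Finset.prod_nonneg fun i _ => hpos v hv i]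
    exact Finset.sum_congr rfl fun v hv =>
      (ENNReal.ofReal_prod_of_nonneg fun i _ => hpos v hv i).symm
  rw [hlaw fun v => ∃ j, 3 / 4 < C.len d (pat ξ c d) v j,
    hlaw fun v => 1 / 2 / 4 ^ (d + 1) < ∏ i, C.wt (v i), ← ENNReal.ofReal_ofNat,
    ← ENNReal.ofReal_mul (by norm_num)]
  refine ENNReal.ofReal_le_ofReal ?_
  convert C.long_le d (pat ξ c d) fun i => hξ _

end CellSystem

/-! ### The measure-preserving refinement step -/

/-- The cylinder sets fixing finitely many letters. -/
def letterCylinders : Set (Set (ℤ → ℕ)) :=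
  {S | ∃ (F : Finset ℤ) (η : ℤ → ℕ), S = {x | ∀ t ∈ F, x t = η t}}

lemma isPiSystem_letterCylinders : IsPiSystem letterCylinders := by
  classical
  rintro _ ⟨F, η, rfl⟩ _ ⟨F', η', rfl⟩ ⟨x, hx, hx'⟩
  refine ⟨F ∪ F', x, ?_⟩
  ext y
  constructor
  · rintro ⟨hy, hy'⟩ t ht
    rcases Finset.mem_union.1 ht with h | h
    · rw [hy t h, hx t h]
    · rw [hy' t h, hx' t h]
  · intro hy
    exact ⟨fun t ht => (hy t (Finset.mem_union_left _ ht)).trans (hx t ht),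
      fun t ht => (hy t (Finset.mem_union_right _ ht)).trans (hx' t ht)⟩

lemma measurableSet_letterCylinder (F : Finset ℤ) (η : ℤ → ℕ) :
    MeasurableSet {x : ℤ → ℕ | ∀ t ∈ F, x t = η t} := by
  simp only [Set.ofPred_forall]
  exact MeasurableSet.iInter fun t => MeasurableSet.iInter fun _ =>
    measurable_pi_apply t (measurableSet_singleton _)

lemma generateFrom_letterCylinders :
    MeasurableSpace.generateFrom letterCylinders = MeasurableSpace.pi := by
  refine le_antisymm (MeasurableSpace.generateFrom_le ?_) ?_
  · rintro _ ⟨F, η, rfl⟩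
    exact measurableSet_letterCylinder F η
  · refine iSup_le fun t => ?_
    rintro _ ⟨B, -, rfl⟩
    have : (fun x : ℤ → ℕ => x t) ⁻¹' B = ⋃ b ∈ B, {x | ∀ s ∈ ({t} : Finset ℤ), x s = b} := by
      ext x
      simp
    rw [this]
    exact MeasurableSet.biUnion (Set.to_countable _) fun b _ =>
      MeasurableSpace.measurableSet_generateFrom ⟨{t}, fun _ => b, rfl⟩

lemma univ_mem_letterCylinders : Set.univ ∈ letterCylinders := ⟨∅, fun _ => 0, by simp⟩

lemma ext_of_letterCylinders {μ ν : Measure (ℤ → ℕ)} [IsFiniteMeasure μ]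
    (h : ∀ (F : Finset ℤ) (η : ℤ → ℕ), μ {x | ∀ t ∈ F, x t = η t} = ν {x | ∀ t ∈ F, x t = η t}) :
    μ = ν := by
  have h' : ∀ S ∈ letterCylinders, μ S = ν S := by
    rintro _ ⟨F, η, rfl⟩
    exact h F η
  exact ext_of_generate_finite _ generateFrom_letterCylinders.symm isPiSystem_letterCylinders h'
    (h' _ univ_mem_letterCylinders)

/-- The law of an independent sequence of letters of law `r`. -/
def iid (r : Measure ℕ) [IsProbabilityMeasure r] : Measure (ℤ → ℕ) :=
  Measure.infinitePi fun _ => r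

instance (r : Measure ℕ) [IsProbabilityMeasure r] : IsProbabilityMeasure (iid r) := by
  unfold iid; infer_instance

lemma iid_cylinder (r : Measure ℕ) [IsProbabilityMeasure r] (F : Finset ℤ) (η : ℤ → ℕ) :
    iid r {x | ∀ t ∈ F, x t = η t} = ∏ t ∈ F, r {η t} := by
  rw [iid, ← Measure.infinitePi_pi (fun _ => r) (s := F) (t := fun t => {η t})
    fun t _ => measurableSet_singleton _]
  rfl

lemma ae_iid_of_ae {r : Measure ℕ} [IsProbabilityMeasure r] {P : ℕ → Prop}
    (h : ∀ᵐ a ∂r, P a) : ∀ᵐ ξ ∂iid r, ∀ t, P (ξ t) := by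
  rw [ae_all_iff]
  intro t
  exact (measurePreserving_eval_infinitePi (fun _ : ℤ => r) t).quasiMeasurePreserving.ae h

/-- The weights of the cell system `C` are the conditional probabilities of a letter of law `r'`
given its image, of law `r`, under `α`. -/
structure CellSystem.Refines (C : CellSystem) (α : ℕ → ℕ) (r r' : Measure ℕ) : Prop where
  map_eq : ∀ a, ∀ b ∈ C.fib a, α b = a
  mass_eq : ∀ a, ∀ b ∈ C.fib a, r' {b} = ENNReal.ofReal (C.wt b) * r {a}
  null : ∀ b, b ∉ C.fib (α b) → r' {b} = 0
  ae_nonempty : ∀ᵐ a ∂r, (C.fib a).Nonempty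

lemma CellSystem.Refines.map_step {C : CellSystem} {α : ℕ → ℕ} {r r' : Measure ℕ}
    [IsProbabilityMeasure r] [IsProbabilityMeasure r'] (h : C.Refines α r r') {m : ℕ}
    (hcut : ∀ᵐ ξ ∂iid r, CutsUnbounded m ξ) :
    ((iid r).prod unitSeq).map (fun x => (C.relabel m x.1 x.2, C.rescale m x.1 x.2)) =
      (iid r').prod unitSeq := by
  classical
  have hmeas := (C.measurable_relabel m).prodMk (C.measurable_rescale m)
  have hspan : IsCountablySpanning letterCylinders :=
    ⟨fun _ => Set.univ, fun _ => univ_mem_letterCylinders, Set.iUnion_const _⟩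
  have huniv : Set.univ ∈ squareCylinders fun _ : ℤ => {s : Set ℝ | MeasurableSet s} :=
    ⟨∅, fun _ => Set.univ, fun _ _ => by simp, by simp⟩
  have hspan' : IsCountablySpanning (squareCylinders fun _ : ℤ => {s : Set ℝ | MeasurableSet s}) :=
    ⟨fun _ => Set.univ, fun _ => huniv, Set.iUnion_const _⟩
  have : IsProbabilityMeasure (((iid r).prod unitSeq).map
      fun x => (C.relabel m x.1 x.2, C.rescale m x.1 x.2)) :=
    Measure.isProbabilityMeasure_map hmeas.aemeasurable
  refine ext_of_generate_finite _
    (generateFrom_eq_prod generateFrom_letterCylinders generateFrom_squareCylinders hspan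
      hspan').symm
    (isPiSystem_letterCylinders.prod (isPiSystem_squareCylinders
      (fun _ => MeasurableSpace.isPiSystem_measurableSet) fun _ => by simp)) ?_
    (by rw [measure_univ, measure_univ])
  rintro _ ⟨_, ⟨F, η, rfl⟩, _, ⟨G, A, hA, rfl⟩, rfl⟩
  have hA' : ∀ t, MeasurableSet (A t) := fun t => hA t trivial
  have hset : MeasurableSet ({x : ℤ → ℕ | ∀ t ∈ F, x t = η t} ×ˢ (G : Set ℤ).pi A) :=
    (measurableSet_letterCylinder F η).prod
      (MeasurableSet.pi (Finset.countable_toSet G) fun t _ => hA' t)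
  rw [Measure.map_apply hmeas hset, Measure.prod_prod, Measure.prod_apply (hmeas hset),
    iid_cylinder, unitSeq, Measure.infinitePi_pi _ fun t _ => hA' t, ← unitSeq]
  have hA₁ : ∀ t, MeasurableSet (if t ∈ G then A t else Set.univ) := fun t => by
    split_ifs
    exacts [hA' t, MeasurableSet.univ]
  have key : ∀ᵐ ξ ∂iid r, unitSeq (Prod.mk ξ ⁻¹'
      ((fun x => (C.relabel m x.1 x.2, C.rescale m x.1 x.2)) ⁻¹'
        ({x : ℤ → ℕ | ∀ t ∈ F, x t = η t} ×ˢ (G : Set ℤ).pi A))) =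
      {ξ | ∀ t ∈ F, ξ t = α (η t)}.indicator (fun _ => ∏ t ∈ F,
        if η t ∈ C.fib (α (η t)) then ENNReal.ofReal (C.wt (η t)) else 0) ξ *
        ∏ t ∈ G, unitMeasure (A t) := by
    filter_upwards [hcut, ae_iid_of_ae h.ae_nonempty] with ξ hξ hne
    have h1 := C.measure_relabel_cylinder hξ hne F G η hA₁ fun t ht => if_neg ht
    have h2 : {z | (∀ t ∈ F, C.relabel m ξ z t = η t) ∧
        ∀ t ∈ G, C.rescale m ξ z t ∈ if t ∈ G then A t else Set.univ} = Prod.mk ξ ⁻¹'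
      ((fun x => (C.relabel m x.1 x.2, C.rescale m x.1 x.2)) ⁻¹'
        ({x : ℤ → ℕ | ∀ t ∈ F, x t = η t} ×ˢ (G : Set ℤ).pi A)) := by
      ext z
      refine and_congr Iff.rfl (forall₂_congr fun t ht => ?_)
      rw [if_pos (Finset.mem_coe.1 ht)]
    rw [← h2, h1]
    congr 1
    · by_cases hmem : ∀ t ∈ F, ξ t = α (η t)
      · rw [Set.indicator_of_mem (show ξ ∈ {ξ : ℤ → ℕ | ∀ t ∈ F, ξ t = α (η t)} from hmem)]
        exact Finset.prod_congr rfl fun t ht => by rw [hmem t ht]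
      · rw [Set.indicator_of_notMem (show ξ ∉ {ξ : ℤ → ℕ | ∀ t ∈ F, ξ t = α (η t)} from hmem)]
        push Not at hmem
        obtain ⟨t, ht, hne⟩ := hmem
        exact Finset.prod_eq_zero ht (if_neg fun hη => hne (h.map_eq _ _ hη).symm)
    · exact Finset.prod_congr rfl fun t ht => by rw [if_pos ht]
  rw [lintegral_congr_ae key, lintegral_mul_const' _ _ (ENNReal.prod_ne_top fun t _ => measure_ne_top _ _),
    lintegral_indicator_const (measurableSet_letterCylinder F fun t => α (η t)),
    iid_cylinder, ← Finset.prod_mul_distrib]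
  congr 1
  refine Finset.prod_congr rfl fun t _ => ?_
  split_ifs with hη
  · exact (h.mass_eq _ _ hη).symm
  · rw [zero_mul, h.null _ hη]

/-- The probability of a long interval at a site is controlled by that of a heavy pattern. -/
lemma CellSystem.Refines.measure_long_le {C : CellSystem} {α : ℕ → ℕ} {r r' : Measure ℕ}
    [IsProbabilityMeasure r] [IsProbabilityMeasure r'] (h : C.Refines α r r') {m : ℕ}
    (hcut : ∀ᵐ ξ ∂iid r, CutsUnbounded m ξ) (t : ℤ) :
    ((iid r).prod unitSeq) {x | 3 / 4 < C.lenSite m x.1 (C.relabel m x.1 x.2) t} ≤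
      2 * iid r' {η | C.Heavy m (fun s => α (η s)) η t} := by
  have hrel := C.measurable_relabel m
  have hpair := measurable_fst.prodMk hrel
  have hH : MeasurableSet {y : (ℤ → ℕ) × (ℤ → ℕ) | C.Heavy m y.1 y.2 t} := by
    have h1 : Measurable fun y : (ℤ → ℕ) × (ℤ → ℕ) =>
        ((1 : ℝ) / 2 / 4 ^ (back m y.1 t + ahead m y.1 t + 1),
          ∏ i, C.wt (pat y.2 (t - back m y.1 t) (back m y.1 t + ahead m y.1 t) i)) := by
      refine measurable_blockwise m t measurable_fst
        (H := fun y c d _ => ((1 : ℝ) / 2 / 4 ^ (d + 1), ∏ i, C.wt (pat y.2 c d i)))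
        fun c d i => measurable_const.prodMk (Finset.measurable_prod _ fun i _ => ?_)
      exact (measurable_of_countable C.wt).comp
        ((measurable_pi_apply (c + (i : ℕ))).comp measurable_snd)
    exact h1 measurableSet_lt'
  have hL : MeasurableSet {x : (ℤ → ℕ) × (ℤ → ℝ) |
      3 / 4 < C.lenSite m x.1 (C.relabel m x.1 x.2) t} :=
    ((C.measurable_lenSite m t).comp hpair) measurableSet_Ioi
  have hmap := congrArg (Measure.map Prod.fst) (h.map_step hcut)
  rw [Measure.map_fst_prod, measure_univ, one_smul,
    Measure.map_map measurable_fst (hrel.prodMk (C.measurable_rescale m))] at hmap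
  have hα : Measurable fun (η : ℤ → ℕ) => ((fun s => α (η s), η) : (ℤ → ℕ) × (ℤ → ℕ)) :=
    (measurable_pi_lambda _ fun s =>
      (measurable_of_countable α).comp (measurable_pi_apply s)).prodMk measurable_id
  have hH' : MeasurableSet {η | C.Heavy m (fun s => α (η s)) η t} := hα hH
  rw [← hmap, Measure.map_apply (measurable_fst.comp (hrel.prodMk (C.measurable_rescale m))) hH']
  have hae : ∀ᵐ x ∂(iid r).prod unitSeq, ∀ s, α (C.relabel m x.1 x.2 s) = x.1 s := by
    have h1 : ∀ᵐ x ∂(iid r).prod unitSeq, CutsUnbounded m x.1 :=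
      Measure.quasiMeasurePreserving_fst.ae hcut
    have h2 : ∀ᵐ x ∂(iid r).prod unitSeq, ∀ s, (C.fib (x.1 s)).Nonempty :=
      Measure.quasiMeasurePreserving_fst.ae (ae_iid_of_ae h.ae_nonempty)
    have h3 : ∀ᵐ x ∂(iid r).prod unitSeq, ∀ s, x.2 s ∈ Set.Ico (0 : ℝ) 1 :=
      Measure.quasiMeasurePreserving_snd.ae ae_unitSeq_mem
    filter_upwards [h1, h2, h3] with x h1 h2 h3 s
    exact h.map_eq _ _ (C.relabel_spec h1 h2 h3 s).1
  have hcongr : (Prod.fst ∘ fun x : (ℤ → ℕ) × (ℤ → ℝ) =>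
      (C.relabel m x.1 x.2, C.rescale m x.1 x.2)) ⁻¹' {η | C.Heavy m (fun s => α (η s)) η t}
      =ᵐ[(iid r).prod unitSeq] {x : (ℤ → ℕ) × (ℤ → ℝ) | C.Heavy m x.1 (C.relabel m x.1 x.2) t} := by
    refine eventuallyEq_set.2 ?_
    filter_upwards [hae] with x hx
    simp only [Set.mem_preimage, Function.comp_apply, Set.mem_ofPred_eq, hx]
  have hP : MeasurableSet {x : (ℤ → ℕ) × (ℤ → ℝ) | C.Heavy m x.1 (C.relabel m x.1 x.2) t} :=
    hpair hH
  rw [measure_congr hcongr, Measure.prod_apply hL, Measure.prod_apply hP,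
    ← lintegral_const_mul' _ _ (by finiteness)]
  refine lintegral_mono_ae ?_
  filter_upwards [hcut, ae_iid_of_ae h.ae_nonempty] with ξ hξ hne
  exact C.measure_long_le hξ hne t

/-! ### Recurrence of cuts -/

lemma isCut_iff_Ico {m : ℕ} {ξ : ℤ → ℕ} {c : ℤ} :
    IsCut m ξ c ↔ ∀ t ∈ Finset.Ico c (c + m), ξ t = 0 := by
  constructor
  · intro h t ht
    rw [Finset.mem_Ico] at ht
    have := h (t - c).toNat (by omega)
    rwa [Int.toNat_of_nonneg (by omega), add_sub_cancel] at this
  · intro h i hi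
    exact h _ (Finset.mem_Ico.2 (by omega))

lemma measure_isCut (r : Measure ℕ) [IsProbabilityMeasure r] (m : ℕ) (c : ℤ) :
    iid r {ξ | IsCut m ξ c} = r {0} ^ m := by
  simp only [isCut_iff_Ico]
  rw [iid_cylinder r _ fun _ => 0]
  simp

lemma ae_frequently_isCut {r : Measure ℕ} [IsProbabilityMeasure r] (hr : r {0} ≠ 0) (m : ℕ)
    {e : ℕ → ℤ} (he : Pairwise fun i j => Disjoint (Finset.Ico (e i) (e i + m))
      (Finset.Ico (e j) (e j + m))) :
    ∀ᵐ ξ ∂iid r, ∃ᶠ j in atTop, IsCut m ξ (e j) := by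
  classical
  have hmeas : ∀ j, MeasurableSet {ξ | IsCut m ξ (e j)} := fun j => by
    simp only [isCut_iff_Ico]
    exact measurableSet_letterCylinder _ fun _ => 0
  have hind : ProbabilityTheory.iIndepSet (fun j => {ξ | IsCut m ξ (e j)}) (iid r) := by
    rw [ProbabilityTheory.iIndepSet_iff_meas_biInter hmeas]
    intro S
    have : ⋂ j ∈ S, {ξ | IsCut m ξ (e j)} =
        {ξ | ∀ t ∈ S.biUnion fun j => Finset.Ico (e j) (e j + m), ξ t = 0} := by
      ext ξ
      simp only [Set.mem_iInter, Set.mem_ofPred_eq, isCut_iff_Ico, Finset.mem_biUnion]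
      exact ⟨fun h t ⟨j, hj, ht⟩ => h j hj t ht, fun h j hj t ht => h t ⟨j, hj, ht⟩⟩
    rw [this, iid_cylinder r _ fun _ => 0, Finset.prod_biUnion fun i _ j _ hij => he hij]
    refine Finset.prod_congr rfl fun j _ => ?_
    rw [measure_isCut]
    simp
  have hsum : ∑' j, iid r {ξ | IsCut m ξ (e j)} = ⊤ := by
    simp only [measure_isCut]
    exact ENNReal.tsum_const_eq_top_of_ne_zero (pow_ne_zero _ hr)
  have hone := ProbabilityTheory.measure_limsup_eq_one hmeas hind hsum
  have := (prob_compl_eq_zero_iff (MeasurableSet.measurableSet_limsup hmeas)).2 hone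
  filter_upwards [compl_mem_ae_iff.2 this] with ξ hξ
  simpa [mem_limsup_iff_frequently_mem] using hξ

lemma ae_cutsUnbounded {r : Measure ℕ} [IsProbabilityMeasure r] (hr : r {0} ≠ 0) (m : ℕ) :
    ∀ᵐ ξ ∂iid r, CutsUnbounded m ξ := by
  have hdisj : ∀ e : ℕ → ℤ, (∀ i j, i < j → e i + m ≤ e j ∨ e j + m ≤ e i) →
      Pairwise fun i j => Disjoint (Finset.Ico (e i) (e i + m)) (Finset.Ico (e j) (e j + m)) := by
    intro e he i j hij
    rw [Finset.disjoint_left]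
    intro t ht ht'
    rw [Finset.mem_Ico] at ht ht'
    rcases lt_or_gt_of_ne hij with h | h <;> rcases he _ _ h with h | h <;> omega
  have h1 := ae_frequently_isCut hr m (hdisj (fun j => -(((m + 1) * j : ℕ) : ℤ))
    fun i j hij => Or.inr (by push_cast; nlinarith))
  have h2 := ae_frequently_isCut hr m (hdisj (fun j => (((m + 1) * j : ℕ) : ℤ))
    fun i j hij => Or.inl (by push_cast; nlinarith))
  filter_upwards [h1, h2] with ξ h1 h2 N
  obtain ⟨j, hj, hc⟩ := frequently_atTop.1 h1 N
  obtain ⟨i, hi, hc₂⟩ := frequently_atTop.1 h2 N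
  exact ⟨⟨_, by nlinarith, hc⟩, ⟨_, by nlinarith, hc₂⟩⟩

/-! ### Heavy patterns are rare -/

lemma ae_eventually_le_sum {r : Measure ℕ} [IsProbabilityMeasure r] {f : ℕ → ℝ}
    (hf : Integrable f r) {a : ℝ} (ha : a < ∫ b, f b ∂r) {e : ℕ → ℤ} (he : Function.Injective e) :
    ∀ᵐ η ∂iid r, ∃ A : ℕ, ∀ N, A ≤ N → a * N ≤ ∑ i ∈ Finset.range N, f (η (e i)) := by
  have hfm : Measurable f := measurable_of_countable f
  have hmp : ∀ t : ℤ, MeasurePreserving (fun η : ℤ → ℕ => η t) (iid r) r := fun t =>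
    measurePreserving_eval_infinitePi (fun _ : ℤ => r) t
  have hlln := ProbabilityTheory.strong_law_ae_real (μ := iid r) (fun i η => f (η (e i)))
    (((hmp (e 0)).integrable_comp hf.aestronglyMeasurable).2 hf)
    (fun i j hij => (ProbabilityTheory.iIndepFun_infinitePi (P := fun _ : ℤ => r)
      (X := fun _ => f) fun _ => hfm).indepFun (he.ne hij))
    fun i => ⟨(hfm.comp (measurable_pi_apply _)).aemeasurable,
      (hfm.comp (measurable_pi_apply _)).aemeasurable, by
        have h := fun t => Measure.map_map (μ := iid r) hfm (hmp t).measurable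
        simp only [(hmp _).map_eq] at h
        exact (h (e i)).symm.trans (h (e 0))⟩
  have hf_int : ∫ η, f (η (e 0)) ∂iid r = ∫ b, f b ∂r := by
    have h := integral_map (μ := iid r) (hmp (e 0)).measurable.aemeasurable
      hfm.aestronglyMeasurable
    rw [(hmp (e 0)).map_eq] at h
    exact h.symm
  rw [hf_int] at hlln
  filter_upwards [hlln] with η hη
  obtain ⟨A, hA⟩ := eventually_atTop.1 (hη.eventually (lt_mem_nhds ha))
  refine ⟨A + 1, fun N hN => ?_⟩
  have hpos : (0 : ℝ) < N := by exact_mod_cast (by omega : 0 < N)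
  exact ((lt_div_iff₀ hpos).1 (hA N (by omega))).le

lemma exists_measure_not_le {Ω : Type*} [MeasurableSpace Ω] {μ : Measure Ω} [IsFiniteMeasure μ]
    {P : ℕ → Ω → Prop} (hm : ∀ n, MeasurableSet {ω | P n ω}) (hmono : ∀ ω, Monotone fun n => P n ω)
    (h : ∀ᵐ ω ∂μ, ∃ n, P n ω) {δ : ℝ≥0∞} (hδ : 0 < δ) : ∃ n, μ {ω | ¬ P n ω} ≤ δ := by
  have hlim := tendsto_measure_iInter_atTop (μ := μ) (s := fun n => {ω | ¬ P n ω})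
    (fun n => (hm n).compl.nullMeasurableSet)
    (fun i j hij ω hω hi => hω (hmono ω hij hi)) ⟨0, measure_ne_top _ _⟩
  have hzero : μ (⋂ n, {ω | ¬ P n ω}) = 0 := by
    rw [← nonpos_iff_eq_zero, ← ae_iff.1 h]
    refine measure_mono fun ω hω => ?_
    simpa using hω
  rw [hzero] at hlim
  obtain ⟨n, hn⟩ := (hlim.eventually (gt_mem_nhds hδ)).exists
  exact ⟨n, hn.le⟩

lemma isCut_comp_iff {α : ℕ → ℕ} (hα : ∀ b, α b = 0 ↔ b = 0) {m : ℕ} {η : ℤ → ℕ} {c : ℤ} :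
    IsCut m (fun s => α (η s)) c ↔ IsCut m η c := by
  simp only [IsCut, hα]

lemma two_mul_four_pow_le_exp {L : ℕ} (hL : 1 ≤ L) : (2 * 4 ^ L : ℝ) ≤ Real.exp (3 * L) := by
  have h8 : (8 : ℝ) ≤ Real.exp 3 := by
    have h := Real.add_one_le_exp (1 : ℝ)
    have h3 : Real.exp 3 = Real.exp 1 ^ 3 := by rw [← Real.exp_nat_mul]; norm_num
    rw [h3]
    calc (8 : ℝ) = 2 ^ 3 := by norm_num
      _ ≤ _ := by gcongr; linarith
  calc (2 * 4 ^ L : ℝ) ≤ 2 ^ L * 4 ^ L := by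
        gcongr
        exact le_self_pow₀ (by norm_num) (by omega)
    _ = 8 ^ L := by rw [← mul_pow]; norm_num
    _ ≤ Real.exp 3 ^ L := by gcongr
    _ = _ := by rw [← Real.exp_nat_mul, mul_comm]

lemma CellSystem.not_heavy {C : CellSystem} {m : ℕ} {ξ η : ℤ → ℕ} {t : ℤ}
    (hpos : ∀ s, 0 < C.wt (η s))
    (hb : 3 * (back m ξ t : ℝ) ≤
      ∑ i ∈ Finset.range (back m ξ t), -Real.log (C.wt (η (t - 1 - (i : ℤ)))))
    (ha : 3 * ((ahead m ξ t + 1 : ℕ) : ℝ) ≤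
      ∑ i ∈ Finset.range (ahead m ξ t + 1), -Real.log (C.wt (η (t + (i : ℤ))))) :
    ¬ C.Heavy m ξ η t := by
  rw [Heavy, not_lt]
  set k := back m ξ t
  set l := ahead m ξ t
  have hsum : ∑ i : Fin (k + l + 1), -Real.log (C.wt (pat η (t - k) (k + l) i)) =
      ∑ i ∈ Finset.range k, -Real.log (C.wt (η (t - 1 - (i : ℤ)))) +
      ∑ i ∈ Finset.range (l + 1), -Real.log (C.wt (η (t + (i : ℤ)))) := by
    have h1 : ∑ i : Fin (k + l + 1), -Real.log (C.wt (pat η (t - k) (k + l) i)) =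
        ∑ i ∈ Finset.range (k + (l + 1)), -Real.log (C.wt (η (t - k + (i : ℕ)))) := by
      rw [← Fin.sum_univ_eq_sum_range fun i => -Real.log (C.wt (η (t - k + (i : ℕ))))]
      rfl
    rw [h1, Finset.sum_range_add, ← Finset.sum_range_reflect]
    congr 1
    · refine Finset.sum_congr rfl fun i hi => ?_
      rw [Finset.mem_range] at hi
      congr 4
      omega
    · refine Finset.sum_congr rfl fun i hi => ?_
      congr 4
      push_cast
      ring
  have hprod : ∏ i, C.wt (pat η (t - k) (k + l) i) =
      Real.exp (-∑ i : Fin (k + l + 1), -Real.log (C.wt (pat η (t - k) (k + l) i))) := by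
    rw [Finset.sum_neg_distrib, neg_neg, Real.exp_sum]
    exact Finset.prod_congr rfl fun i _ => (Real.exp_log (hpos _)).symm
  rw [hprod, hsum, Real.exp_neg, div_div, one_div]
  refine inv_anti₀ (by positivity) ((two_mul_four_pow_le_exp (by omega)).trans ?_)
  rw [Real.exp_le_exp]
  push_cast at ha ⊢
  linarith

lemma CellSystem.Refines.eventually_heavy_le {C : CellSystem} {α : ℕ → ℕ} {r r' : Measure ℕ}
    [IsProbabilityMeasure r'] (h : C.Refines α r r') (hα : ∀ b, α b = 0 ↔ b = 0)
    (h0 : r' {0} ≠ 0) (h1 : r' {0} < 1) (hf_int : Integrable (fun b => -Real.log (C.wt b)) r')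
    (hent : 3 < ∫ b, -Real.log (C.wt b) ∂r') (t : ℤ) {δ : ℝ≥0∞} (hδ : 0 < δ) :
    ∀ᶠ m in atTop, iid r' {η | C.Heavy m (fun s => α (η s)) η t} ≤ δ := by
  have hb := ae_eventually_le_sum hf_int hent (e := fun i => t - 1 - (i : ℤ))
    fun i j hij => by simpa using hij
  have ha := ae_eventually_le_sum hf_int hent (e := fun i => t + (i : ℤ))
    fun i j hij => by simpa using hij
  have hsm : ∀ (e : ℕ → ℤ) (N : ℕ), Measurable fun η : ℤ → ℕ =>
      ∑ i ∈ Finset.range N, -Real.log (C.wt (η (e i))) := fun e N =>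
    Finset.measurable_sum _ fun i _ => (measurable_of_countable
      fun b => -Real.log (C.wt b)).comp (measurable_pi_apply (e i))
  obtain ⟨A, hA⟩ := exists_measure_not_le (μ := iid r') (δ := δ / 2)
    (P := fun A η => ∀ N : ℕ, A ≤ N →
      3 * (N : ℝ) ≤ ∑ i ∈ Finset.range N, -Real.log (C.wt (η (t - 1 - (i : ℤ)))) ∧
      3 * (N : ℝ) ≤ ∑ i ∈ Finset.range N, -Real.log (C.wt (η (t + (i : ℤ)))))
    (fun A => by
      simp only [Set.ofPred_forall, Set.ofPred_and]
      exact MeasurableSet.iInter fun N => MeasurableSet.iInter fun _ =>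
        (measurableSet_le measurable_const (hsm _ N)).inter
          (measurableSet_le measurable_const (hsm _ N)))
    (fun η i j hij hi N hN => hi N (hij.trans hN))
    (by
      filter_upwards [ha, hb] with η ⟨A, hA⟩ ⟨B, hB⟩
      exact ⟨max A B, fun N hN => ⟨hB N (le_of_max_le_right hN), hA N (le_of_max_le_left hN)⟩⟩)
    (ENNReal.half_pos hδ.ne')
  have hpow : Tendsto (fun m => ((Finset.Icc (t - A) (t + A)).card : ℝ≥0∞) * r' {0} ^ m) atTop
      (nhds 0) := by
    have := ENNReal.Tendsto.const_mul (tendsto_pow_atTop_nhds_zero_of_lt_one h1)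
      (Or.inr (ENNReal.natCast_ne_top (Finset.Icc (t - A) (t + A)).card))
    rwa [mul_zero] at this
  filter_upwards [hpow.eventually (gt_mem_nhds (ENNReal.half_pos hδ.ne'))] with m hm
  have hwt : ∀ᵐ η ∂iid r', ∀ s, 0 < C.wt (η s) := by
    refine ae_iid_of_ae (r := r') (P := fun b => 0 < C.wt b)
      (ae_iff_of_countable.2 fun b hb => ?_)
    by_contra hneg
    exact hb (h.null b fun hmem => hneg (C.wt_pos _ _ hmem))
  have hsub : ∀ᵐ η ∂iid r', C.Heavy m (fun s => α (η s)) η t →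
      η ∈ {η | ¬ ∀ N : ℕ, A ≤ N →
      3 * (N : ℝ) ≤ ∑ i ∈ Finset.range N, -Real.log (C.wt (η (t - 1 - (i : ℤ)))) ∧
      3 * (N : ℝ) ≤ ∑ i ∈ Finset.range N, -Real.log (C.wt (η (t + (i : ℤ))))} ∪
      ⋃ c ∈ Finset.Icc (t - A) (t + A), {η | IsCut m η c} := by
    filter_upwards [hwt, ae_cutsUnbounded h0 m] with η hpos hcut hheavy
    by_contra hnot
    simp only [Set.mem_union, Set.mem_iUnion, Set.mem_ofPred_eq, not_or, not_not, not_exists,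
      Finset.mem_Icc] at hnot
    obtain ⟨hgood, hnocut⟩ := hnot
    have hcut' : CutsUnbounded m fun s => α (η s) := by
      simpa only [CutsUnbounded, isCut_comp_iff hα] using hcut
    have hbl := hcut'.isBlock t
    have hl := (isCut_comp_iff hα).1 hbl.left
    have hr := (isCut_comp_iff hα).1 hbl.right
    have hk : A ≤ back m (fun s => α (η s)) t := by
      by_contra hlt
      exact hnocut _ (by omega) hl
    have hk' : A ≤ ahead m (fun s => α (η s)) t + 1 := by
      by_contra hlt
      exact hnocut _ (by omega) hr
    exact CellSystem.not_heavy hpos (hgood _ hk).1 (hgood _ hk').2 hheavy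
  calc iid r' {η | C.Heavy m (fun s => α (η s)) η t} ≤ _ := measure_mono_ae hsub
    _ ≤ δ / 2 + δ / 2 := by
      refine (measure_union_le _ _).trans (add_le_add hA ?_)
      refine (measure_biUnion_finset_le _ _).trans ?_
      simp only [measure_isCut, Finset.sum_const, nsmul_eq_mul]
      exact hm.le
    _ = δ := ENNReal.add_halves δ

/-! ### Truncated letters and their refinements -/

/-- The law of a letter truncated at `n`. -/
def trunc (ρ : Measure ℕ) (n : ℕ) : Measure ℕ := ρ.map fun b => min b n

instance (ρ : Measure ℕ) [IsProbabilityMeasure ρ] (n : ℕ) : IsProbabilityMeasure (trunc ρ n) :=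
  Measure.isProbabilityMeasure_map (measurable_of_countable _).aemeasurable

lemma trunc_real (ρ : Measure ℕ) (n : ℕ) (S : Set ℕ) :
    (trunc ρ n).real S = ρ.real ((fun b => min b n) ⁻¹' S) :=
  map_measureReal_apply (measurable_of_countable _) (MeasurableSet.of_discrete)

lemma trunc_apply (ρ : Measure ℕ) (n : ℕ) (S : Set ℕ) :
    trunc ρ n S = ρ ((fun b => min b n) ⁻¹' S) :=
  Measure.map_apply (measurable_of_countable _) (MeasurableSet.of_discrete)

lemma trunc_singleton_of_lt (ρ : Measure ℕ) {n b : ℕ} (h : b < n) : trunc ρ n {b} = ρ {b} := by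
  rw [trunc_apply]
  congr 1
  ext x
  simp only [Set.mem_preimage, Set.mem_singleton_iff]
  omega

lemma trunc_singleton_of_gt (ρ : Measure ℕ) {n b : ℕ} (h : n < b) : trunc ρ n {b} = 0 := by
  rw [trunc_apply]
  convert measure_empty (μ := ρ)
  ext x
  simp only [Set.mem_preimage, Set.mem_singleton_iff, Set.mem_empty_iff_false, iff_false]
  omega

lemma trunc_real_pos {ρ : Measure ℕ} [IsProbabilityMeasure ρ] (hρ : ∀ b, 0 < ρ.real {b}) {n b : ℕ}
    (h : b ≤ n) : 0 < (trunc ρ n).real {b} := by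
  rw [trunc_real]
  refine (hρ b).trans_le (measureReal_mono ?_)
  rintro _ rfl
  simpa using h

lemma ae_trunc_le (ρ : Measure ℕ) (n : ℕ) : ∀ᵐ b ∂trunc ρ n, b ≤ n := by
  refine ae_iff_of_countable.2 fun b hb => ?_
  by_contra hlt
  exact hb (trunc_singleton_of_gt ρ (not_le.1 hlt))

lemma trunc_real_eq_sum (ρ : Measure ℕ) [IsProbabilityMeasure ρ] {n n' : ℕ} (h : n ≤ n') (a : ℕ) :
    (trunc ρ n).real {a} =
      ∑ b ∈ (Finset.range (n' + 1)).filter (fun b => min b n = a), (trunc ρ n').real {b} := by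
  rw [sum_measureReal_singleton, trunc_real, trunc_real]
  congr 1
  ext x
  simp only [Set.mem_preimage, Set.mem_singleton_iff, Finset.coe_filter, Finset.mem_range,
    Set.mem_ofPred_eq]
  omega

lemma exists_refinement {ρ : Measure ℕ} [IsProbabilityMeasure ρ] (hρ : ∀ b, 0 < ρ.real {b})
    {n n' : ℕ} (h : n ≤ n') : ∃ C : CellSystem,
      C.Refines (fun b => min b n) (trunc ρ n) (trunc ρ n') ∧
      (∀ a b, b ∈ C.fib a ↔ b ≤ n' ∧ min b n = a) ∧
      ∀ b, C.wt b = (trunc ρ n').real {b} / (trunc ρ n).real {min b n} := by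
  obtain ⟨C, hfib, hwt⟩ := exists_cellSystem
    (fun a => (Finset.range (n' + 1)).filter fun b => min b n = a)
    (fun b => (trunc ρ n').real {b} / (trunc ρ n).real {min b n})
    (fun a b hb => by
      rw [Finset.mem_filter, Finset.mem_range] at hb
      exact div_pos (trunc_real_pos hρ (by omega)) (trunc_real_pos hρ (by omega)))
    (fun a ⟨b, hb⟩ => by
      rw [Finset.mem_filter, Finset.mem_range] at hb
      have hpos := trunc_real_pos hρ (n := n) (b := a) (by omega)
      rw [Finset.sum_congr rfl fun c hc => by rw [(Finset.mem_filter.1 hc).2],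
        ← Finset.sum_div, ← trunc_real_eq_sum ρ h, div_self hpos.ne'])
  have hmem : ∀ a b, b ∈ C.fib a ↔ b ≤ n' ∧ min b n = a := fun a b => by
    rw [hfib, Finset.mem_filter, Finset.mem_range, Nat.lt_succ_iff]
  refine ⟨C, ⟨fun a b hb => ((hmem a b).1 hb).2, fun a b hb => ?_, fun b hb => ?_, ?_⟩, hmem,
    fun b => by rw [hwt]⟩
  · obtain ⟨hb, rfl⟩ := (hmem a b).1 hb
    have hpos := trunc_real_pos hρ (n := n) (b := min b n) (by omega)
    rw [hwt, ← ofReal_measureReal (s := {min b n}), ← ENNReal.ofReal_mul (by positivity),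
      div_mul_cancel₀ _ hpos.ne', ofReal_measureReal]
  · refine trunc_singleton_of_gt ρ (not_le.1 fun hle => hb ((hmem _ b).2 ⟨hle, rfl⟩))
  · filter_upwards [ae_trunc_le ρ n] with a ha
    exact ⟨a, (hmem a a).2 ⟨by omega, by omega⟩⟩

lemma integrable_trunc (ρ : Measure ℕ) [IsProbabilityMeasure ρ] (n : ℕ) (f : ℕ → ℝ) :
    Integrable f (trunc ρ n) := by
  have h := IntegrableOn.finset (μ := trunc ρ n) (s := Finset.range (n + 1)) (f := f)
  rwa [IntegrableOn, Measure.restrict_eq_self_of_ae_mem] at h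
  filter_upwards [ae_trunc_le ρ n] with b hb
  simpa [Nat.lt_succ_iff] using hb

lemma exists_large_entropy {ρ : Measure ℕ} [IsProbabilityMeasure ρ] (hρ : ∀ b, 0 < ρ.real {b})
    (hent : ∑' b, ENNReal.ofReal (-(ρ.real {b} * Real.log (ρ.real {b}))) = ⊤) (n : ℕ) :
    ∃ n', n < n' ∧ 3 < ∫ b, -Real.log
      ((trunc ρ n').real {b} / (trunc ρ n).real {min b n}) ∂trunc ρ n' := by
  set T := (trunc ρ n).real {n}
  have hT : 0 < T := trunc_real_pos hρ le_rfl
  have hnonneg : ∀ b, 0 ≤ -(ρ.real {b} * Real.log (ρ.real {b})) := fun b => by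
    have := mul_nonneg (hρ b).le (neg_nonneg.2 (Real.log_nonpos (hρ b).le measureReal_le_one))
    linarith
  have hdiv := (not_summable_iff_tendsto_nat_atTop_of_nonneg hnonneg).1
    fun hs => hs.tsum_ofReal_ne_top hent
  obtain ⟨n', hn', hlarge⟩ := ((eventually_gt_atTop n).and (hdiv.eventually_gt_atTop
    (3 - Real.log T + ∑ b ∈ Finset.range n, -(ρ.real {b} * Real.log (ρ.real {b}))))).exists
  refine ⟨n', hn', lt_of_lt_of_le ?_ (setIntegral_le_integral
    (s := (Finset.Ico n n' : Finset ℕ)) (integrable_trunc ρ n' _) ?_)⟩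
  · rw [setIntegral_finset _ IntegrableOn.finset]
    have hterm : ∀ b ∈ Finset.Ico n n', (trunc ρ n').real {b} • -Real.log
        ((trunc ρ n').real {b} / (trunc ρ n).real {min b n}) =
        -(ρ.real {b} * Real.log (ρ.real {b})) + ρ.real {b} * Real.log T := by
      intro b hb
      rw [Finset.mem_Ico] at hb
      rw [measureReal_def (trunc ρ n'), trunc_singleton_of_lt ρ hb.2, min_eq_right hb.1,
        ← measureReal_def, Real.log_div (hρ b).ne' hT.ne', smul_eq_mul]
      ring
    rw [Finset.sum_congr rfl hterm, Finset.sum_add_distrib, ← Finset.sum_mul,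
      sum_measureReal_singleton, Finset.sum_Ico_eq_sub _ hn'.le]
    have hle : ρ.real (Finset.Ico n n' : Finset ℕ) ≤ 1 := measureReal_le_one
    have hlog : Real.log T ≤ 0 := Real.log_nonpos hT.le measureReal_le_one
    nlinarith
  · filter_upwards [ae_trunc_le ρ n'] with b hb
    have hpos := trunc_real_pos hρ (n := n) (b := min b n) (by omega)
    refine neg_nonneg.2 (Real.log_nonpos (by positivity) ((div_le_one hpos).2 ?_))
    rw [trunc_real_eq_sum ρ hn'.le]
    exact Finset.single_le_sum (f := fun b => (trunc ρ n').real {b}) (fun _ _ => measureReal_nonneg)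
      (Finset.mem_filter.2 ⟨Finset.mem_range.2 (by omega), rfl⟩)

/-- One step of the construction: truncation levels `n < n'`, a cell system and a cut length. -/
structure Stage (ρ : Measure ℕ) [IsProbabilityMeasure ρ] (n n' k : ℕ) where
  cells : CellSystem
  cutLen : ℕ
  refines : cells.Refines (fun b => min b n) (trunc ρ n) (trunc ρ n')
  mem_fib : ∀ a b, b ∈ cells.fib a ↔ b ≤ n' ∧ min b n = a
  heavy_le : 1 ≤ n → ∀ t ∈ Finset.Icc (-(k : ℤ)) k,
    iid (trunc ρ n') {η | cells.Heavy cutLen (fun s => min (η s) n) η t} ≤ 2⁻¹ ^ k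

lemma exists_stage {ρ : Measure ℕ} [IsProbabilityMeasure ρ] (hρ : ∀ b, 0 < ρ.real {b})
    (hent : ∑' b, ENNReal.ofReal (-(ρ.real {b} * Real.log (ρ.real {b}))) = ⊤) (n k : ℕ) :
    ∃ n', n < n' ∧ Nonempty (Stage ρ n n' k) := by
  obtain ⟨n', hn', hlarge⟩ := exists_large_entropy hρ hent n
  obtain ⟨C, hC, hfib, hwt⟩ := exists_refinement hρ hn'.le
  refine ⟨n', hn', ?_⟩
  by_cases hn : 1 ≤ n
  · simp only [← hwt] at hlarge
    have h01 : trunc ρ n' {0} < 1 := by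
      have h1 := trunc_real_pos hρ (n := n') (b := 1) (by omega)
      have h2 : trunc ρ n' {0} + trunc ρ n' {1} ≤ 1 := by
        rw [← measure_union (by simp) (measurableSet_singleton _)]
        exact prob_le_one
      refine lt_of_lt_of_le (ENNReal.lt_add_right (measure_ne_top _ _) fun h => ?_) h2
      rw [measureReal_def, h] at h1
      simp at h1
    have h0 : trunc ρ n' {0} ≠ 0 := fun h => by
      have h1 := trunc_real_pos hρ (n := n') (b := 0) (by omega)
      rw [measureReal_def, h] at h1
      simp at h1
    obtain ⟨m, hm⟩ := ((eventually_all_finset (Finset.Icc (-(k : ℤ)) k)).2 fun t _ =>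
      hC.eventually_heavy_le (fun b => by omega) h0 h01 (integrable_trunc ρ n' _) hlarge t
        (δ := 2⁻¹ ^ k) (ENNReal.pow_pos (ENNReal.inv_pos.2 ENNReal.ofNat_ne_top) k)).exists
    exact ⟨⟨C, m, hC, hfib, fun _ => hm⟩⟩
  · exact ⟨⟨C, 0, hC, hfib, fun h => absurd h hn⟩⟩

/-! ### Stability of one step under perturbations -/

lemma pat_eventuallyEq {X β : Type*} {l : Filter X} {Y : X → ℤ → β} {y : ℤ → β}
    (h : ∀ t, ∀ᶠ x in l, Y x t = y t) (c : ℤ) (d : ℕ) : ∀ᶠ x in l, pat (Y x) c d = pat y c d := by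
  filter_upwards [eventually_all.2 fun i : Fin (d + 1) => h (c + (i : ℕ))] with x hx
  exact funext hx

lemma IsBlock.eventually {X : Type*} {l : Filter X} {Ξ : X → ℤ → ℕ} {m : ℕ} {ξ : ℤ → ℕ} {c : ℤ}
    {d : ℕ} (hB : IsBlock m ξ c d) (h : ∀ t, ∀ᶠ x in l, Ξ x t = ξ t) :
    ∀ᶠ x in l, IsBlock m (Ξ x) c d := by
  filter_upwards [eventually_all.2 fun i : Fin (d + 1 + m) => h (c + (i : ℕ))] with x hx
  exact hB.congr fun i hi => hx ⟨i, hi⟩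

namespace CellSystem

variable {C : CellSystem} {m : ℕ} {ξ : ℤ → ℕ}

lemma relabel_box (hcut : CutsUnbounded m ξ) (hξ : ∀ t, (C.fib (ξ t)).Nonempty) {z : ℤ → ℝ}
    (hz : ∀ t, z t ∈ Set.Ico (0 : ℝ) 1) (t : ℤ) :
    0 < C.lenSite m ξ (C.relabel m ξ z) t ∧ C.lenSite m ξ (C.relabel m ξ z) t ≤ 1 := by
  have hB := hcut.isBlock t
  obtain ⟨h1, h2, h3⟩ := site_box (C := C) hcut hB.left hB.right
    (fun s _ => (relabel_spec hcut hξ hz s).1) (t := t) (by rw [Finset.mem_Ico]; omega)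
  exact ⟨h2, by linarith⟩

lemma eventually_site_eq {X : Type*} {l : Filter X} {Ξ H : X → ℤ → ℕ} {η : ℤ → ℕ}
    (hcut : CutsUnbounded m ξ) (hΞ : ∀ t, ∀ᶠ x in l, Ξ x t = ξ t)
    (hH : ∀ t, ∀ᶠ x in l, H x t = η t) (t : ℤ) :
    ∀ᶠ x in l, C.loSite m (Ξ x) (H x) t = C.loSite m ξ η t ∧
      C.lenSite m (Ξ x) (H x) t = C.lenSite m ξ η t := by
  have hB := hcut.isBlock t
  have hi : t = t - back m ξ t + ((⟨back m ξ t, by omega⟩ :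
    Fin (back m ξ t + ahead m ξ t + 1)) : ℕ) := by simp
  filter_upwards [hB.eventually hΞ, pat_eventuallyEq hΞ (t - back m ξ t) (back m ξ t + ahead m ξ t),
    pat_eventuallyEq hH (t - back m ξ t) (back m ξ t + ahead m ξ t)] with x h1 h2 h3
  generalize (⟨back m ξ t, _⟩ : Fin (back m ξ t + ahead m ξ t + 1)) = i at hi
  rw [hi, loSite_of_isBlock h1, loSite_of_isBlock hB, lenSite_of_isBlock h1, lenSite_of_isBlock hB,
    h2, h3]
  exact ⟨rfl, rfl⟩

lemma eventually_relabel_eq {X : Type*} {l : Filter X} {Ξ : X → ℤ → ℕ} {Z : X → ℤ → ℝ} {z : ℤ → ℝ}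
    (hcut : CutsUnbounded m ξ) (hξ : ∀ t, (C.fib (ξ t)).Nonempty)
    (hz : ∀ t, z t ∈ Set.Ico (0 : ℝ) 1) (hpos : ∀ t, 0 < C.rescale m ξ z t)
    (hΞ : ∀ t, ∀ᶠ x in l, Ξ x t = ξ t) (hZ : ∀ t, Tendsto (fun x => Z x t) l (nhds (z t)))
    (t : ℤ) : ∀ᶠ x in l, C.relabel m (Ξ x) (Z x) t = C.relabel m ξ z t := by
  have hB := hcut.isBlock t
  have hi : t = t - back m ξ t + ((⟨back m ξ t, by omega⟩ :
    Fin (back m ξ t + ahead m ξ t + 1)) : ℕ) := by simp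
  generalize (⟨back m ξ t, _⟩ : Fin (back m ξ t + ahead m ξ t + 1)) = i at hi
  generalize t - (back m ξ t : ℤ) = c, back m ξ t + ahead m ξ t = d at *
  subst hi
  have hnear : ∀ j : Fin (d + 1), ∀ᶠ x in l, Z x (c + (j : ℕ)) ∈
      Set.Ico (C.lo d (pat ξ c d) (pat (C.relabel m ξ z) c d) j)
        (C.lo d (pat ξ c d) (pat (C.relabel m ξ z) c d) j +
          C.len d (pat ξ c d) (pat (C.relabel m ξ z) c d) j) := by
    intro j
    have h1 := (relabel_spec hcut hξ hz (c + (j : ℕ))).2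
    have h2 := hpos (c + (j : ℕ))
    have h3 := (relabel_box hcut hξ hz (c + (j : ℕ))).1
    rw [rescale, lt_div_iff₀ h3, zero_mul, sub_pos] at h2
    rw [loSite_of_isBlock hB, lenSite_of_isBlock hB] at h1
    rw [loSite_of_isBlock hB] at h2
    filter_upwards [(hZ (c + (j : ℕ))).eventually (Ioo_mem_nhds h2 h1.2)] with x hx
    exact ⟨hx.1.le, hx.2⟩
  filter_upwards [hB.eventually hΞ, pat_eventuallyEq hΞ c d, eventually_all.2 hnear] with x h1 h2 h3
  rw [relabel_of_isBlock h1, h2, lab_eq (w := pat ξ c d) (u := pat (Z x) c d) (v := pat (C.relabel m ξ z) c d)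
    (fun j => (relabel_spec hcut hξ hz _).1) h3]
  rfl

lemma tendsto_rescale {X : Type*} {l : Filter X} {Ξ : X → ℤ → ℕ} {Z : X → ℤ → ℝ} {z : ℤ → ℝ}
    (hcut : CutsUnbounded m ξ) (hξ : ∀ t, (C.fib (ξ t)).Nonempty)
    (hz : ∀ t, z t ∈ Set.Ico (0 : ℝ) 1) (hpos : ∀ t, 0 < C.rescale m ξ z t)
    (hΞ : ∀ t, ∀ᶠ x in l, Ξ x t = ξ t) (hZ : ∀ t, Tendsto (fun x => Z x t) l (nhds (z t)))
    (t : ℤ) : Tendsto (fun x => C.rescale m (Ξ x) (Z x) t) l (nhds (C.rescale m ξ z t)) := by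
  refine (((hZ t).sub_const _).div_const _).congr' ?_
  filter_upwards [eventually_site_eq (C := C) hcut hΞ
    (eventually_relabel_eq hcut hξ hz hpos hΞ hZ) t] with x hx
  rw [rescale, hx.1, hx.2]

end CellSystem

/-! ### The tower of refinements -/

/-- Truncation levels increasing to infinity from `0`, with a refinement between consecutive
levels. -/
structure Tower (ρ : Measure ℕ) [IsProbabilityMeasure ρ] where
  level : ℕ → ℕ
  level_zero : level 0 = 0
  strictMono : StrictMono level
  stage : ∀ k, Stage ρ (level k) (level (k + 1)) k

lemma nonempty_tower {ρ : Measure ℕ} [IsProbabilityMeasure ρ] (hρ : ∀ b, 0 < ρ.real {b})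
    (hent : ∑' b, ENNReal.ofReal (-(ρ.real {b} * Real.log (ρ.real {b}))) = ⊤) :
    Nonempty (Tower ρ) := by
  choose next hlt hstage using exists_stage hρ hent
  let level : ℕ → ℕ := fun k => Nat.rec 0 (fun k n => next n k) k
  exact ⟨⟨level, rfl, strictMono_nat_of_lt_succ fun k => hlt (level k) k,
    fun k => (hstage (level k) k).some⟩⟩

namespace Tower

variable {ρ : Measure ℕ} [IsProbabilityMeasure ρ] (T : Tower ρ)

/-- The cell system of the `k`-th refinement. -/
abbrev cells (k : ℕ) : CellSystem := (T.stage k).cells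

/-- The cut length of the `k`-th refinement. -/
abbrev cutLen (k : ℕ) : ℕ := (T.stage k).cutLen

/-- The letters truncated at level `k` and the remaining coordinates. -/
def state : ℕ → (ℤ → ℝ) → (ℤ → ℕ) × (ℤ → ℝ)
  | 0, z => (fun _ => 0, z)
  | k + 1, z => ((T.cells k).relabel (T.cutLen k) (state k z).1 (state k z).2,
      (T.cells k).rescale (T.cutLen k) (state k z).1 (state k z).2)

/-- The length of the interval at the site `t` in the `k`-th refinement. -/
def width (k : ℕ) (z : ℤ → ℝ) (t : ℤ) : ℝ :=
  (T.cells k).lenSite (T.cutLen k) (T.state k z).1 (T.state (k + 1) z).1 t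

/-- The lower end of the interval at the site `t` in the `k`-th refinement. -/
def base (k : ℕ) (z : ℤ → ℝ) (t : ℤ) : ℝ :=
  (T.cells k).loSite (T.cutLen k) (T.state k z).1 (T.state (k + 1) z).1 t

/-- The sequences at which the whole construction works. -/
structure Good (z : ℤ → ℝ) : Prop where
  cuts : ∀ k, CutsUnbounded (T.cutLen k) (T.state k z).1
  mem_Ioo : ∀ k t, (T.state k z).2 t ∈ Set.Ioo (0 : ℝ) 1
  narrow : ∀ t K, ∃ j, K ≤ j ∧ T.width j z t ≤ 3 / 4
  stable : ∀ t, ∃ k, (T.state k z).1 t < T.level k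

/-- The limiting sequence of letters. -/
def code (z : ℤ → ℝ) (t : ℤ) : ℕ :=
  (T.state (sInf {k | (T.state k z).1 t < T.level k}) z).1 t

lemma state_shift (k : ℕ) (z : ℤ → ℝ) :
    T.state k (shift z) = (shift (T.state k z).1, shift (T.state k z).2) := by
  induction k with
  | zero => rfl
  | succ k ih =>
    simp only [state]
    rw [ih, CellSystem.relabel_shift, CellSystem.rescale_shift]

lemma width_shift (k : ℕ) (z : ℤ → ℝ) (t : ℤ) : T.width k (shift z) t = T.width k z (t + 1) := by
  rw [width, state_shift, state_shift, CellSystem.lenSite_shift, width]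

lemma code_shift (z : ℤ → ℝ) : T.code (shift z) = shift (T.code z) := by
  funext t
  simp only [code, state_shift, shift]

lemma good_shift {z : ℤ → ℝ} : T.Good (shift z) ↔ T.Good z := by
  have hall : ∀ {P : ℤ → Prop}, (∀ t, P (t + 1)) ↔ ∀ t, P t := fun {P} =>
    ⟨fun h t => by simpa using h (t - 1), fun h t => h (t + 1)⟩
  have h1 : (∀ k, CutsUnbounded (T.cutLen k) (T.state k (shift z)).1) ↔
      ∀ k, CutsUnbounded (T.cutLen k) (T.state k z).1 := by
    simp only [state_shift, cutsUnbounded_shift]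
  have h2 : (∀ k t, (T.state k (shift z)).2 t ∈ Set.Ioo (0 : ℝ) 1) ↔
      ∀ k t, (T.state k z).2 t ∈ Set.Ioo (0 : ℝ) 1 := by
    simp only [state_shift]
    exact forall_congr' fun k => hall (P := fun t => (T.state k z).2 t ∈ Set.Ioo (0 : ℝ) 1)
  have h3 : (∀ t K, ∃ j, K ≤ j ∧ T.width j (shift z) t ≤ 3 / 4) ↔
      ∀ t K, ∃ j, K ≤ j ∧ T.width j z t ≤ 3 / 4 := by
    simp only [width_shift]
    exact hall (P := fun t => ∀ K, ∃ j, K ≤ j ∧ T.width j z t ≤ 3 / 4)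
  have h4 : (∀ t, ∃ k, (T.state k (shift z)).1 t < T.level k) ↔
      ∀ t, ∃ k, (T.state k z).1 t < T.level k := by
    simp only [state_shift]
    exact hall (P := fun t => ∃ k, (T.state k z).1 t < T.level k)
  exact ⟨fun h => ⟨h1.1 h.1, h2.1 h.2, h3.1 h.3, h4.1 h.4⟩,
    fun h => ⟨h1.2 h.1, h2.2 h.2, h3.2 h.3, h4.2 h.4⟩⟩

variable {T}

lemma nonempty_fib {k a : ℕ} (h : a ≤ T.level k) : ((T.cells k).fib a).Nonempty :=
  ⟨a, ((T.stage k).mem_fib a a).2 ⟨h.trans (T.strictMono k.lt_succ_self).le, min_eq_left h⟩⟩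

namespace Good

variable {z : ℤ → ℝ}

lemma state_le (hz : T.Good z) (k : ℕ) (t : ℤ) : (T.state k z).1 t ≤ T.level k := by
  induction k generalizing t with
  | zero => exact Nat.zero_le _
  | succ k ih =>
    exact (((T.stage k).mem_fib _ _).1 (CellSystem.relabel_spec (hz.cuts k)
      (fun t => nonempty_fib (ih t)) (fun t => Set.Ioo_subset_Ico_self (hz.mem_Ioo k t)) t).1).1

lemma fib_nonempty (hz : T.Good z) (k : ℕ) (t : ℤ) : ((T.cells k).fib ((T.state k z).1 t)).Nonempty :=
  nonempty_fib (hz.state_le k t)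

lemma mem_Ico (hz : T.Good z) (k : ℕ) (t : ℤ) : (T.state k z).2 t ∈ Set.Ico (0 : ℝ) 1 :=
  Set.Ioo_subset_Ico_self (hz.mem_Ioo k t)

lemma min_state_succ (hz : T.Good z) (k : ℕ) (t : ℤ) :
    min ((T.state (k + 1) z).1 t) (T.level k) = (T.state k z).1 t :=
  (((T.stage k).mem_fib _ _).1 (CellSystem.relabel_spec (hz.cuts k) (hz.fib_nonempty k)
    (hz.mem_Ico k) t).1).2

lemma min_state (hz : T.Good z) {j k : ℕ} (hjk : j ≤ k) (t : ℤ) :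
    min ((T.state k z).1 t) (T.level j) = (T.state j z).1 t := by
  induction k, hjk using Nat.le_induction with
  | base => exact min_eq_left (hz.state_le j t)
  | succ k hjk ih =>
    rw [← ih, ← hz.min_state_succ k t, min_assoc, min_eq_right (T.strictMono.monotone hjk)]

lemma state_eq_min (hz : T.Good z) (k : ℕ) (t : ℤ) : (T.state k z).1 t = min (T.code z t) (T.level k) := by
  have hlt : (T.state (sInf {k | (T.state k z).1 t < T.level k}) z).1 t <
      T.level (sInf {k | (T.state k z).1 t < T.level k}) := Nat.sInf_mem (hz.stable t)
  rw [code]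
  set k₀ := sInf {k | (T.state k z).1 t < T.level k}
  rcases le_total k k₀ with h | h
  · exact (hz.min_state h t).symm
  · have h1 := hz.min_state h t
    have h2 := T.strictMono.monotone h
    omega

lemma code_eq_of_lt (hz : T.Good z) {k : ℕ} {t : ℤ} (h : (T.state k z).1 t < T.level k) :
    T.code z t = (T.state k z).1 t := by
  have := hz.state_eq_min k t
  omega

lemma width_mem (hz : T.Good z) (k : ℕ) (t : ℤ) : 0 < T.width k z t ∧ T.width k z t ≤ 1 :=
  CellSystem.relabel_box (hz.cuts k) (hz.fib_nonempty k) (hz.mem_Ico k) t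

lemma coord_eq (hz : T.Good z) (k : ℕ) (t : ℤ) :
    (T.state k z).2 t = T.base k z t + T.width k z t * (T.state (k + 1) z).2 t := by
  have h : (T.state (k + 1) z).2 t = ((T.state k z).2 t - T.base k z t) / T.width k z t := rfl
  rw [h, mul_div_cancel₀ _ (hz.width_mem k t).1.ne', add_sub_cancel]

lemma eventually_state (hz : T.Good z) (k : ℕ) :
    (∀ t, ∀ᶠ x in nhds z, (T.state k x).1 t = (T.state k z).1 t) ∧
      ∀ t, Tendsto (fun x => (T.state k x).2 t) (nhds z) (nhds ((T.state k z).2 t)) := by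
  induction k with
  | zero =>
    exact ⟨fun t => Eventually.of_forall fun x => rfl, fun t => (continuous_apply t).tendsto z⟩
  | succ k ih =>
    exact ⟨CellSystem.eventually_relabel_eq (hz.cuts k) (hz.fib_nonempty k) (hz.mem_Ico k)
        (fun t => (hz.mem_Ioo (k + 1) t).1) ih.1 ih.2,
      CellSystem.tendsto_rescale (hz.cuts k) (hz.fib_nonempty k) (hz.mem_Ico k)
        (fun t => (hz.mem_Ioo (k + 1) t).1) ih.1 ih.2⟩

lemma continuousWithinAt_code (hz : T.Good z) : ContinuousWithinAt T.code {x | T.Good x} z := by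
  rw [ContinuousWithinAt, tendsto_pi_nhds]
  intro t
  obtain ⟨k, hk⟩ := hz.stable t
  refine tendsto_nhds_of_eventually_eq ?_
  filter_upwards [self_mem_nhdsWithin, nhdsWithin_le_nhds ((hz.eventually_state k).1 t)] with x hx h
  rw [hz.code_eq_of_lt hk, ← h]
  exact code_eq_of_lt hx (h ▸ hk)

lemma exists_prod_width_le (hz : T.Good z) (t : ℤ) (M : ℕ) :
    ∃ K, ∏ j ∈ Finset.range K, T.width j z t ≤ (3 / 4) ^ M := by
  induction M with
  | zero => exact ⟨0, by simp⟩
  | succ M ih =>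
    obtain ⟨K, hK⟩ := ih
    obtain ⟨j, hj, hw⟩ := hz.narrow t K
    refine ⟨j + 1, ?_⟩
    rw [Finset.prod_range_succ, pow_succ]
    refine mul_le_mul (le_trans ?_ hK) hw (hz.width_mem j t).1.le (by positivity)
    rw [← Finset.prod_range_mul_prod_Ico _ hj]
    exact mul_le_of_le_one_right (Finset.prod_nonneg fun i _ => (hz.width_mem i t).1.le)
      (Finset.prod_le_one (fun i _ => (hz.width_mem i t).1.le) fun i _ => (hz.width_mem i t).2)

lemma comap_code_le (hz : T.Good z) : comap T.code (nhds (T.code z)) ⊓ 𝓟 {x | T.Good x} ≤ nhds z := by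
  set l := comap T.code (nhds (T.code z)) ⊓ 𝓟 {x | T.Good x}
  have hgood : ∀ᶠ x in l, T.Good x := mem_inf_of_right (mem_principal_self _)
  have hcode : ∀ t, ∀ᶠ x in l, T.code x t = T.code z t := fun t => by
    have h : Tendsto T.code l (nhds (T.code z)) := tendsto_comap.mono_left inf_le_left
    exact (tendsto_pi_nhds.1 h t).eventually ((isOpen_discrete {T.code z t}).mem_nhds rfl)
  have hstate : ∀ k t, ∀ᶠ x in l, (T.state k x).1 t = (T.state k z).1 t := fun k t => by
    filter_upwards [hgood, hcode t] with x hx h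
    rw [hx.state_eq_min, hz.state_eq_min, h]
  rw [← tendsto_id', tendsto_pi_nhds]
  intro t
  have hdiff : ∀ K, ∀ᶠ x in l, |x t - z t| =
      (∏ j ∈ Finset.range K, T.width j z t) * |(T.state K x).2 t - (T.state K z).2 t| := by
    intro K
    induction K with
    | zero => exact Eventually.of_forall fun x => by simp [state]
    | succ K ih =>
      filter_upwards [ih, hgood, CellSystem.eventually_site_eq (C := T.cells K) (hz.cuts K)
        (hstate K) (hstate (K + 1)) t] with x h1 hx h2
      have hb : T.base K x t = T.base K z t := h2.1
      have hw : T.width K x t = T.width K z t := h2.2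
      rw [h1, hx.coord_eq K t, hz.coord_eq K t, hb, hw, add_sub_add_left_eq_sub, ← mul_sub, abs_mul,
        abs_of_pos (hz.width_mem K t).1, Finset.prod_range_succ, mul_assoc]
  rw [Metric.tendsto_nhds]
  intro ε hε
  obtain ⟨M, hM⟩ := exists_pow_lt_of_lt_one hε (show (3 / 4 : ℝ) < 1 by norm_num)
  obtain ⟨K, hK⟩ := hz.exists_prod_width_le t M
  filter_upwards [hdiff K, hgood] with x h hx
  have h1 := hx.mem_Ioo K t
  have h2 := hz.mem_Ioo K t
  have h3 : |(T.state K x).2 t - (T.state K z).2 t| ≤ 1 := by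
    rw [abs_le]
    constructor <;> linarith [h1.1, h1.2, h2.1, h2.2]
  rw [Real.dist_eq, id, h]
  have h4 : 0 ≤ ∏ j ∈ Finset.range K, T.width j z t :=
    Finset.prod_nonneg fun j _ => (hz.width_mem j t).1.le
  calc _ ≤ (∏ j ∈ Finset.range K, T.width j z t) * 1 := by gcongr
    _ < ε := by linarith

end Good

end Tower

namespace Tower

variable {ρ : Measure ℕ} [IsProbabilityMeasure ρ] (T : Tower ρ)

lemma measurable_state (k : ℕ) : Measurable (T.state k) := by
  induction k with
  | zero => exact measurable_const.prodMk measurable_id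
  | succ k ih =>
    exact (((T.cells k).measurable_relabel _).comp ih).prodMk
      (((T.cells k).measurable_rescale _).comp ih)

lemma measurable_letter (k : ℕ) (t : ℤ) : Measurable fun z => (T.state k z).1 t :=
  (measurable_pi_apply t).comp (measurable_fst.comp (T.measurable_state k))

lemma measurable_coord (k : ℕ) (t : ℤ) : Measurable fun z => (T.state k z).2 t :=
  (measurable_pi_apply t).comp (measurable_snd.comp (T.measurable_state k))

lemma measurable_width (k : ℕ) (t : ℤ) : Measurable fun z => T.width k z t :=
  ((T.cells k).measurable_lenSite _ t).comp ((measurable_fst.comp (T.measurable_state k)).prodMk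
    (measurable_fst.comp (T.measurable_state (k + 1))))

lemma measurableSet_good : MeasurableSet {z | T.Good z} := by
  have : {z | T.Good z} =
      (⋂ k, {z | CutsUnbounded (T.cutLen k) (T.state k z).1}) ∩
      (⋂ k, ⋂ t, {z | (T.state k z).2 t ∈ Set.Ioo (0 : ℝ) 1}) ∩
      (⋂ t, ⋂ K, ⋃ j, ⋃ _ : K ≤ j, {z | T.width j z t ≤ 3 / 4}) ∩
      ⋂ t, ⋃ k, {z | (T.state k z).1 t < T.level k} := by
    ext z
    simp only [Set.mem_inter_iff, Set.mem_iInter, Set.mem_iUnion, Set.mem_ofPred_eq, exists_prop]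
    exact ⟨fun h => ⟨⟨⟨h.1, h.2⟩, h.3⟩, h.4⟩, fun h => ⟨h.1.1.1, h.1.1.2, h.1.2, h.2⟩⟩
  rw [this]
  refine (((MeasurableSet.iInter fun k => ?_).inter (MeasurableSet.iInter fun k =>
    MeasurableSet.iInter fun t => ?_)).inter (MeasurableSet.iInter fun t =>
    MeasurableSet.iInter fun K => MeasurableSet.iUnion fun j => MeasurableSet.iUnion fun _ => ?_)).inter
    (MeasurableSet.iInter fun t => MeasurableSet.iUnion fun k => ?_)
  · exact (measurable_fst.comp (T.measurable_state k)) (measurableSet_cutsUnbounded _)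
  · exact T.measurable_coord k t measurableSet_Ioo
  · exact T.measurable_width j t measurableSet_Iic
  · exact T.measurable_letter k t measurableSet_Iio

lemma trunc_zero_ne_zero (hρ : ∀ b, 0 < ρ.real {b}) (n : ℕ) : trunc ρ n {0} ≠ 0 := fun h => by
  have h1 := trunc_real_pos hρ (Nat.zero_le n)
  rw [measureReal_def, h] at h1
  simp at h1

lemma map_state (hρ : ∀ b, 0 < ρ.real {b}) (k : ℕ) :
    unitSeq.map (T.state k) = (iid (trunc ρ (T.level k))).prod unitSeq := by
  induction k with
  | zero =>
    have h1 : trunc ρ (T.level 0) = Measure.dirac 0 := by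
      rw [trunc, T.level_zero]
      simp
    have h2 : iid (trunc ρ (T.level 0)) = Measure.dirac fun _ => 0 := by
      simp only [iid, h1]
      exact Measure.infinitePi_dirac fun _ => 0
    rw [h2, Measure.dirac_prod]
    rfl
  | succ k ih =>
    have hstep := (T.stage k).refines.map_step
      (ae_cutsUnbounded (trunc_zero_ne_zero hρ (T.level k)) (T.cutLen k))
    rw [← ih, Measure.map_map (((T.cells k).measurable_relabel _).prodMk
      ((T.cells k).measurable_rescale _)) (T.measurable_state k)] at hstep
    exact hstep

lemma measurePreserving_state (hρ : ∀ b, 0 < ρ.real {b}) (k : ℕ) :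
    MeasurePreserving (T.state k) unitSeq ((iid (trunc ρ (T.level k))).prod unitSeq) :=
  ⟨T.measurable_state k, T.map_state hρ k⟩

lemma measurePreserving_letters (hρ : ∀ b, 0 < ρ.real {b}) (k : ℕ) :
    MeasurePreserving (fun z => (T.state k z).1) unitSeq (iid (trunc ρ (T.level k))) :=
  measurePreserving_fst.comp (T.measurePreserving_state hρ k)

lemma ae_exists_of_tendsto_zero {Ω : Type*} [MeasurableSpace Ω] {μ : Measure Ω} {P : ℕ → Ω → Prop}
    (h : Tendsto (fun k => μ {ω | ¬ P k ω}) atTop (nhds 0)) (K : ℕ) :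
    ∀ᵐ ω ∂μ, ∃ j, K ≤ j ∧ P j ω := by
  rw [ae_iff, ← nonpos_iff_eq_zero]
  refine ge_of_tendsto h ?_
  filter_upwards [eventually_ge_atTop K] with k hk
  refine measure_mono fun ω hω hP => hω ⟨k, hk, hP⟩

lemma ae_narrow (hρ : ∀ b, 0 < ρ.real {b}) (t : ℤ) (K : ℕ) :
    ∀ᵐ z ∂unitSeq, ∃ j, K ≤ j ∧ T.width j z t ≤ 3 / 4 := by
  refine ae_exists_of_tendsto_zero ?_ K
  have hlim : Tendsto (fun k : ℕ => (2 : ℝ≥0∞) * 2⁻¹ ^ k) atTop (nhds 0) := by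
    have := ENNReal.Tendsto.const_mul (a := 2) (tendsto_pow_atTop_nhds_zero_of_lt_one
      (show (2⁻¹ : ℝ≥0∞) < 1 by simp)) (Or.inr (by simp))
    rwa [mul_zero] at this
  refine tendsto_of_tendsto_of_tendsto_of_le_of_le' tendsto_const_nhds hlim
    (Eventually.of_forall fun _ => zero_le) ?_
  filter_upwards [eventually_ge_atTop (t.natAbs + 1)] with k hk
  have hS : MeasurableSet {x : (ℤ → ℕ) × (ℤ → ℝ) | 3 / 4 < (T.cells k).lenSite (T.cutLen k) x.1
      ((T.cells k).relabel (T.cutLen k) x.1 x.2) t} :=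
    (((T.cells k).measurable_lenSite _ t).comp
      (measurable_fst.prodMk ((T.cells k).measurable_relabel _))) measurableSet_Ioi
  have hle := (T.stage k).refines.measure_long_le
    (ae_cutsUnbounded (trunc_zero_ne_zero hρ (T.level k)) (T.cutLen k)) t
  rw [← (T.measurePreserving_state hρ k).measure_preimage hS.nullMeasurableSet] at hle
  have hlev : 1 ≤ T.level k := (by omega : 1 ≤ k).trans T.strictMono.le_apply
  have hheavy := (T.stage k).heavy_le hlev t (Finset.mem_Icc.2 (by omega))
  refine le_trans (le_of_eq ?_) (hle.trans (mul_le_mul_right hheavy 2))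
  congr 1
  ext z
  exact not_le

lemma tendsto_measure_Ici {f : ℕ → ℕ} (hf : StrictMono f) :
    Tendsto (fun k => ρ (Set.Ici (f k))) atTop (nhds 0) := by
  have h := tendsto_measure_iInter_atTop (μ := ρ) (s := fun k => Set.Ici (f k))
    (fun k => MeasurableSet.of_discrete.nullMeasurableSet)
    (fun i j hij => Set.Ici_subset_Ici.2 (hf.monotone hij)) ⟨0, measure_ne_top _ _⟩
  have hempty : ⋂ k, Set.Ici (f k) = ∅ := by
    ext b
    simp only [Set.mem_iInter, Set.mem_Ici, Set.mem_empty_iff_false, iff_false, not_forall, not_le]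
    exact ⟨b + 1, (Nat.lt_succ_self b).trans_le hf.le_apply⟩
  rwa [hempty, measure_empty] at h

lemma ae_stable (hρ : ∀ b, 0 < ρ.real {b}) (t : ℤ) :
    ∀ᵐ z ∂unitSeq, ∃ k, (T.state k z).1 t < T.level k := by
  have h := ae_exists_of_tendsto_zero (μ := unitSeq)
    (P := fun k z => (T.state k z).1 t < T.level k) ?_ 0
  · filter_upwards [h] with z ⟨k, _, hk⟩
    exact ⟨k, hk⟩
  · refine (tendsto_measure_Ici (ρ := ρ) T.strictMono).congr fun k => ?_
    have hmp := (measurePreserving_eval_infinitePi (fun _ : ℤ => trunc ρ (T.level k)) t).comp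
      (T.measurePreserving_letters hρ k)
    have h1 := hmp.measure_preimage (s := Set.Ici (T.level k))
      MeasurableSet.of_discrete.nullMeasurableSet
    have h2 : {z | ¬ (T.state k z).1 t < T.level k} =
      (Function.eval t ∘ fun z => (T.state k z).1) ⁻¹' Set.Ici (T.level k) := by
      ext z
      exact not_lt
    rw [h2, h1, trunc_apply]
    congr 1
    ext b
    simp

lemma ae_good (hρ : ∀ b, 0 < ρ.real {b}) : ∀ᵐ z ∂unitSeq, T.Good z := by
  have h1 : ∀ᵐ z ∂unitSeq, ∀ k, CutsUnbounded (T.cutLen k) (T.state k z).1 :=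
    ae_all_iff.2 fun k => (T.measurePreserving_letters hρ k).quasiMeasurePreserving.ae
      (ae_cutsUnbounded (trunc_zero_ne_zero hρ (T.level k)) (T.cutLen k))
  have h2 : ∀ᵐ z ∂unitSeq, ∀ k t, (T.state k z).2 t ∈ Set.Ioo (0 : ℝ) 1 :=
    ae_all_iff.2 fun k => (measurePreserving_snd.comp
      (T.measurePreserving_state hρ k)).quasiMeasurePreserving.ae
        (ae_unitSeq_of_ae (by
          rw [unitMeasure, restrict_Ico_eq_restrict_Ioc, ← restrict_Ioo_eq_restrict_Ioc]
          exact ae_restrict_mem measurableSet_Ioo))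
  filter_upwards [h1, h2, ae_all_iff.2 fun t => ae_all_iff.2 fun K => T.ae_narrow hρ t K,
    ae_all_iff.2 fun t => T.ae_stable hρ t] with z h1 h2 h3 h4
  exact ⟨h1, h2, h3, h4⟩

lemma measure_code_cylinder (hρ : ∀ b, 0 < ρ.real {b}) (F : Finset ℤ) (η : ℤ → ℕ) :
    unitSeq {z | T.Good z ∧ ∀ t ∈ F, T.code z t = η t} = ∏ t ∈ F, ρ {η t} := by
  obtain ⟨k, hk⟩ : ∃ k, ∀ t ∈ F, η t < T.level k :=
    ⟨F.sup η + 1, fun t ht => (Nat.lt_succ_of_le (Finset.le_sup ht)).trans_le T.strictMono.le_apply⟩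
  have h := (T.measurePreserving_letters hρ k).measure_preimage
    (measurableSet_letterCylinder F η).nullMeasurableSet
  rw [iid_cylinder, Finset.prod_congr rfl fun t ht => trunc_singleton_of_lt ρ (hk t ht)] at h
  rw [← h]
  refine measure_congr (eventuallyEq_set.2 ?_)
  filter_upwards [T.ae_good hρ] with z hz
  simp only [Set.mem_ofPred_eq, Set.mem_preimage, hz, true_and]
  refine forall₂_congr fun t ht => ?_
  have h1 := hz.state_eq_min k t
  have h2 := hk t ht
  omega

end Tower

/-- A sequence of uniform variables codes a Bernoulli scheme of infinite entropy, continuously in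
both directions. -/
theorem exists_coding {ρ : Measure ℕ} [IsProbabilityMeasure ρ] (hρ : ∀ b, 0 < ρ.real {b})
    (hent : ∑' b, ENNReal.ofReal (-(ρ.real {b} * Real.log (ρ.real {b}))) = ⊤) :
    ∃ (E : Set (ℤ → ℝ)) (g : (ℤ → ℝ) → ℤ → ℕ), MeasurableSet E ∧ shift ⁻¹' E = E ∧
      unitSeq E = 1 ∧ (∀ z, g (shift z) = shift (g z)) ∧ ContinuousOn g E ∧
      (∀ z ∈ E, comap g (nhds (g z)) ⊓ 𝓟 E ≤ nhds z) ∧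
      ∀ (F : Finset ℤ) (η : ℤ → ℕ),
        unitSeq {z | z ∈ E ∧ ∀ t ∈ F, g z t = η t} = ∏ t ∈ F, ρ {η t} := by
  obtain ⟨T⟩ := nonempty_tower hρ hent
  refine ⟨{z | T.Good z}, T.code, T.measurableSet_good, Set.ext fun z => T.good_shift,
    prob_compl_eq_zero_iff T.measurableSet_good |>.1 (ae_iff.1 (T.ae_good hρ)), T.code_shift,
    fun z hz => Tower.Good.continuousWithinAt_code hz, fun z hz => Tower.Good.comap_code_le hz,
    T.measure_code_cylinder hρ⟩

/-! ### Passing from codings to isomorphisms -/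

lemma shift_surjective {A : Type*} : Function.Surjective (shift : (ℤ → A) → ℤ → A) := fun x =>
  ⟨fun n => x (n - 1), by funext n; simp [shift]⟩

lemma shift_injective {A : Type*} : Function.Injective (shift : (ℤ → A) → ℤ → A) := fun x y h => by
  funext n
  simpa [shift] using congrFun h (n - 1)

/-- The equivariant map `g` embeds the invariant set `E` of full measure homeomorphically into the
sequences of letters, and transports the uniform law to `μ`. -/
structure IsCoding (E : Set (ℤ → ℝ)) (g : (ℤ → ℝ) → ℤ → ℕ) (μ : Measure (ℤ → ℕ)) : Prop where
  measurableSet : MeasurableSet E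
  preimage_shift : shift ⁻¹' E = E
  measure_eq_one : unitSeq E = 1
  map_shift : ∀ z, g (shift z) = shift (g z)
  continuousOn : ContinuousOn g E
  comap_le : ∀ z ∈ E, comap g (nhds (g z)) ⊓ 𝓟 E ≤ nhds z
  map_eq : unitSeq.map g = μ

lemma aemeasurable_unitSeq {E : Set (ℤ → ℝ)} {g : (ℤ → ℝ) → ℤ → ℕ} (hE : MeasurableSet E)
    (h1 : unitSeq E = 1) (hg : ContinuousOn g E) : AEMeasurable g unitSeq := by
  have : unitSeq.restrict E = unitSeq :=
    Measure.restrict_eq_self_of_ae_mem (mem_ae_iff_prob_eq_one hE |>.2 h1)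
  rw [← this]
  exact hg.aemeasurable hE

lemma IsBernoulliMeasure.exists_isCoding {μ : Measure (ℤ → ℕ)} {p : ℕ → ℝ}
    (hμ : IsBernoulliMeasure μ p) (hp : ∀ i, 0 < p i)
    (hent : ∑' i, ENNReal.ofReal (-(p i * Real.log (p i))) = ⊤) : ∃ E g, IsCoding E g μ := by
  have : IsProbabilityMeasure μ := ⟨by simpa using hμ ∅ 0⟩
  have hm : Measurable fun x : ℤ → ℕ => x 0 := measurable_pi_apply 0
  have hprob : IsProbabilityMeasure (μ.map fun x => x 0) :=
    Measure.isProbabilityMeasure_map hm.aemeasurable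
  have hsing : ∀ b, (μ.map fun x => x 0) {b} = ENNReal.ofReal (p b) := fun b => by
    rw [Measure.map_apply hm (measurableSet_singleton b)]
    simpa [Set.preimage] using hμ {0} fun _ => b
  have hreal : ∀ b, (μ.map fun x => x 0).real {b} = p b := fun b => by
    rw [measureReal_def, hsing, ENNReal.toReal_ofReal (hp b).le]
  obtain ⟨E, g, hE, hs, h1, hgs, hc, hle, hcyl⟩ :=
    exists_coding (ρ := μ.map fun x => x 0) (fun b => by rw [hreal]; exact hp b) (by simpa only [hreal] using hent)
  have hg := aemeasurable_unitSeq hE h1 hc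
  refine ⟨E, g, hE, hs, h1, hgs, hc, hle, (ext_of_letterCylinders fun F η => ?_).symm⟩
  rw [Measure.map_apply_of_aemeasurable hg (measurableSet_letterCylinder F η), hμ,
    ENNReal.ofReal_prod_of_nonneg fun i _ => (hp _).le]
  simp only [← hsing]
  rw [← hcyl]
  refine measure_congr (eventuallyEq_set.2 ?_)
  filter_upwards [mem_ae_iff_prob_eq_one hE |>.2 h1] with z hz
  exact ⟨fun h => h.2, fun h => ⟨hz, h⟩⟩

namespace IsCoding

variable {E E' : Set (ℤ → ℝ)} {g g' : (ℤ → ℝ) → ℤ → ℕ} {μ ν : Measure (ℤ → ℕ)}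

lemma inter (h : IsCoding E g μ) (h' : IsCoding E' g' ν) : IsCoding (E ∩ E') g μ where
  measurableSet := h.measurableSet.inter h'.measurableSet
  preimage_shift := by rw [Set.preimage_inter, h.preimage_shift, h'.preimage_shift]
  measure_eq_one := by
    rw [← mem_ae_iff_prob_eq_one (h.measurableSet.inter h'.measurableSet)]
    exact inter_mem ((mem_ae_iff_prob_eq_one h.measurableSet).2 h.measure_eq_one)
      ((mem_ae_iff_prob_eq_one h'.measurableSet).2 h'.measure_eq_one)
  map_shift := h.map_shift
  continuousOn := h.continuousOn.mono Set.inter_subset_left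
  comap_le z hz := (inf_le_inf_left _ (principal_mono.2 Set.inter_subset_left)).trans
    (h.comap_le z hz.1)
  map_eq := h.map_eq

lemma injOn (h : IsCoding E g μ) : Set.InjOn g E := by
  intro z hz z' hz' hzz
  have : pure z' ≤ comap g (nhds (g z)) ⊓ 𝓟 E := by
    refine le_inf ?_ (by simpa using hz')
    rw [← map_le_iff_le_comap, map_pure, hzz]
    exact pure_le_nhds _
  exact (pure_le_nhds_iff.1 (this.trans (h.comap_le z hz))).symm

lemma shift_mem (h : IsCoding E g μ) {z : ℤ → ℝ} : shift z ∈ E ↔ z ∈ E :=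
  Set.ext_iff.1 h.preimage_shift z

/-- The map which decodes a sequence along `g` and encodes the result along `g'`. -/
def recode (E : Set (ℤ → ℝ)) (g g' : (ℤ → ℝ) → ℤ → ℕ) : (ℤ → ℕ) → ℤ → ℕ :=
  fun x => open Classical in if x ∈ g '' E then g' (Function.invFunOn g E x) else 0

lemma recode_apply (h : IsCoding E g μ) {z : ℤ → ℝ} (hz : z ∈ E) : recode E g g' (g z) = g' z := by
  rw [recode, if_pos (Set.mem_image_of_mem g hz), h.injOn.leftInvOn_invFunOn hz]

lemma measurableSet_image (h : IsCoding E g μ) : MeasurableSet (g '' E) :=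
  h.measurableSet.image_of_continuousOn_injOn h.continuousOn h.injOn

lemma continuousOn_recode (h : IsCoding E g μ) (h' : IsCoding E g' ν) :
    ContinuousOn (recode E g g') (g '' E) := by
  rintro _ ⟨z, hz, rfl⟩
  have hinv : Tendsto (Function.invFunOn g E) (nhdsWithin (g z) (g '' E)) (nhdsWithin z E) := by
    have hmem : ∀ᶠ x in nhdsWithin (g z) (g '' E), Function.invFunOn g E x ∈ E := by
      filter_upwards [self_mem_nhdsWithin] with x hx using Function.invFunOn_mem hx
    refine tendsto_nhdsWithin_iff.2 ⟨Tendsto.mono_right (tendsto_inf.2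
      ⟨tendsto_comap_iff.2 ?_, tendsto_principal.2 hmem⟩) (h.comap_le z hz), hmem⟩
    refine (tendsto_id.mono_left nhdsWithin_le_nhds).congr' ?_
    filter_upwards [self_mem_nhdsWithin] with x hx using (Function.invFunOn_eq hx).symm
  rw [ContinuousWithinAt, h.recode_apply hz]
  refine ((h'.continuousOn z hz).tendsto.comp hinv).congr' ?_
  filter_upwards [self_mem_nhdsWithin] with x hx
  rw [recode, if_pos hx, Function.comp_apply]

lemma measurable_recode (h : IsCoding E g μ) (h' : IsCoding E g' ν) :
    Measurable (recode E g g') := by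
  refine measurable_of_restrict_of_restrict_compl h.measurableSet_image
    (continuousOn_iff_continuous_domRestrict.1 (h.continuousOn_recode h')).measurable ?_
  have : (g '' E)ᶜ.domRestrict (recode E g g') = 0 := by
    funext x
    exact if_neg x.2
  rw [this]
  exact measurable_const

lemma isFactorMap_recode (h : IsCoding E g μ) (h' : IsCoding E g' ν) :
    IsFactorMap μ ν (g '' E) (recode E g g') where
  measurable_map := h.measurable_recode h'
  dom_measurable := h.measurableSet_image
  dom_shift_invariant := by
    ext x
    constructor
    · rintro ⟨z, hz, hzx⟩
      obtain ⟨w, rfl⟩ := shift_surjective z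
      exact ⟨w, h.shift_mem.1 hz, shift_injective (by rw [← h.map_shift, hzx])⟩
    · rintro ⟨z, hz, rfl⟩
      exact ⟨shift z, h.shift_mem.2 hz, h.map_shift z⟩
  dom_full := by
    have hg := aemeasurable_unitSeq h.measurableSet h.measure_eq_one h.continuousOn
    rw [← h.map_eq, Measure.map_apply_of_aemeasurable hg h.measurableSet_image]
    exact le_antisymm prob_le_one
      (h.measure_eq_one.symm.le.trans (measure_mono (Set.subset_preimage_image g E)))
  pushforward := by
    have hg := aemeasurable_unitSeq h.measurableSet h.measure_eq_one h.continuousOn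
    rw [← h.map_eq, ← h'.map_eq,
      AEMeasurable.map_map_of_aemeasurable (h.measurable_recode h').aemeasurable hg]
    refine Measure.map_congr ?_
    filter_upwards [mem_ae_iff_prob_eq_one h.measurableSet |>.2 h.measure_eq_one] with z hz
    exact (h.recode_apply hz).symm
  equivariant := by
    rintro _ ⟨z, hz, rfl⟩
    rw [← h.map_shift, h.recode_apply hz, h.recode_apply (h.shift_mem.2 hz), h'.map_shift]

lemma isFinitary_recode (h : IsCoding E g μ) (h' : IsCoding E g' ν) :
    IsFinitary μ (g '' E) (recode E g g') := by
  refine Eventually.of_forall fun x hx => ?_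
  obtain ⟨V, hV, hVsub⟩ := mem_nhdsWithin_iff_exists_mem_nhds_inter.1
    ((h.continuousOn_recode h' x hx).preimage_mem_nhdsWithin
      (((isOpen_discrete {recode E g g' x 0}).preimage (continuous_apply 0)).mem_nhds
        (Set.mem_singleton _)))
  obtain ⟨U, hUV, hU, hxU⟩ := mem_nhds_iff.1 hV
  obtain ⟨I, u, hu, hIU⟩ := isOpen_pi_iff.1 hU x hxU
  refine ⟨I.sup Int.natAbs, I.sup Int.natAbs, fun y hy hyx => hVsub ⟨hUV (hIU fun i hi => ?_), hy⟩⟩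
  have hle : i.natAbs ≤ I.sup Int.natAbs := Finset.le_sup (f := Int.natAbs) hi
  rw [hyx i (by omega) (by omega)]
  exact (hu i hi).2

end IsCoding

/-- **Petit.** Two Bernoulli schemes on a countable alphabet, with strictly positive
probability vectors of infinite entropy, are finitarily isomorphic. -/
theorem countable_bernoulli_infinite_entropy_finitarily_isomorphic
    (p q : ℕ → ℝ)
    (hp_pos : ∀ i, 0 < p i) (hq_pos : ∀ i, 0 < q i)
    (hp_sum : ∑' i, p i = 1) (hq_sum : ∑' i, q i = 1)
    (hp_ent : ∑' i, ENNReal.ofReal (-(p i * Real.log (p i))) = ⊤)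
    (hq_ent : ∑' i, ENNReal.ofReal (-(q i * Real.log (q i))) = ⊤)
    (μ ν : Measure (ℤ → ℕ))
    (hμ : IsBernoulliMeasure μ p) (hν : IsBernoulliMeasure ν q) :
    ∃ (D E : Set (ℤ → ℕ)) (φ ψ : (ℤ → ℕ) → (ℤ → ℕ)),
      IsFinitaryIsomorphism μ ν D E φ ψ := by
  obtain ⟨A, g, hA⟩ := hμ.exists_isCoding hp_pos hp_ent
  obtain ⟨B, g', hB⟩ := hν.exists_isCoding hq_pos hq_ent
  have hg := hA.inter hB
  have hg' := hB.inter hA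
  rw [Set.inter_comm] at hg'
  refine ⟨g '' (A ∩ B), g' '' (A ∩ B), IsCoding.recode (A ∩ B) g g', IsCoding.recode (A ∩ B) g' g,
    hg.isFactorMap_recode hg', hg'.isFactorMap_recode hg, hg.isFinitary_recode hg',
    hg'.isFinitary_recode hg, ?_, ?_⟩
  · rintro _ ⟨z, hz, rfl⟩
    rw [hg.recode_apply hz, hg'.recode_apply hz]
    exact ⟨Set.mem_image_of_mem g' hz, rfl⟩
  · rintro _ ⟨z, hz, rfl⟩
    rw [hg'.recode_apply hz, hg.recode_apply hz]
    exact ⟨Set.mem_image_of_mem g hz, rfl⟩
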